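/- (Theorem 3.3, main result for the convex case.) For every nonempty bounded open convex set Ω ⊆ ℝ², the scale-invariant functional F(Ω) := |Ω|²·λ₁(Ω)·μ₁(Ω) satisfies the sharp two-sided bound π⁴/4 < F(Ω) < 9π²·λ₁(𝔻), where 𝔻 is the open unit disc (so that λ₁(𝔻) = j₀₁²). -/

import Mathlib

open MeasureTheory Filter Set Real RealInnerProductSpace

noncomputable section

abbrev E2 : Type := EuclideanSpace ℝ (Fin 2)

/-- First Dirichlet eigenvalue, variational characterization. -/
noncomputable def dEig1 (Ω : Set E2) : ℝ :=
  sInf { R : ℝ | ∃ u : E2 → ℝ, ContDiff ℝ (⊤ : ℕ∞) u ∧ HasCompactSupport u ∧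
    tsupport u ⊆ Ω ∧ (∫ x, (u x)^2) ≠ 0 ∧
    R = (∫ x, ‖fderiv ℝ u x‖^2) / (∫ x, (u x)^2) }

/-- First nontrivial Neumann eigenvalue, variational characterization. -/
noncomputable def nEig1 (Ω : Set E2) : ℝ :=
  sInf { R : ℝ | ∃ u : E2 → ℝ, ContDiff ℝ (⊤ : ℕ∞) u ∧ (∫ x in Ω, u x) = 0 ∧
    (∫ x in Ω, (u x)^2) ≠ 0 ∧
    R = (∫ x in Ω, ‖fderiv ℝ u x‖^2) / (∫ x in Ω, (u x)^2) }

/-- The open unit disc in the plane. -/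
def unitDisc : Set E2 := Metric.ball 0 1

/-!
Let `B` be a largest disc contained in `Ω`, of radius `r` and centre `p`. By maximality, `0` is a
convex combination `∑ wᵢ nᵢ` of at most three unit normals of `Ω` at points of contact with `B`.

*Lower bound.* Cut the plane according to which `⟪x - p, nᵢ⟫` is largest. On the `i`-th cell this
number is nonnegative, the cell is stable under translation along `nᵢ`, and a test function vanishes
once it reaches `r`; the one-dimensional Poincaré inequality on these half-lines thus yields
the Hersch bound `(π / 2r)² ≤ λ₁(Ω)`. The Payne–Weinberger bound `(π / D)² ≤ μ₁(Ω)`, where `D` is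
the diameter, follows by repeated bisection into thin convex pieces. Finally `r D < |Ω|`: the slices
orthogonal to a diameter have lengths that dominate a tent of height `2r`, strictly so near its peak
because they contain the slices of `B`.

*Upper bound.* Domain monotonicity and scaling give `r² λ₁(Ω) ≤ λ₁(𝔻)`. Either some `wᵢ > 1/3`, or
the three tangent lines form an equilateral triangle; in both cases the lines parallel to some `nᵢ`
meet `Ω` in length less than `3r`. A clipped sine of the orthogonal coordinate then shows
`|Ω|² μ₁(Ω) < (3πr)²`.
-/

section InscribedBall

variable {E : Type*} [NormedAddCommGroup E] [InnerProductSpace ℝ E]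

/-- Unit vectors `n i` in equilibrium: some convex combination of them, with weights `w i`,
vanishes. The outward normals at the contact points of a largest inscribed ball have this
property. -/
structure IsBalanced {ι : Type*} [Fintype ι] (w : ι → ℝ) (n : ι → E) : Prop where
  norm_eq_one : ∀ i, ‖n i‖ = 1
  weight_nonneg : ∀ i, 0 ≤ w i
  sum_weight : ∑ i, w i = 1
  sum_weight_smul : ∑ i, w i • n i = 0

theorem IsBalanced.sum_weight_mul_inner {ι : Type*} [Fintype ι] {w : ι → ℝ} {n : ι → E}
    (h : IsBalanced w n) (x : E) : ∑ i, w i * ⟪x, n i⟫ = 0 := by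
  simpa only [inner_sum, inner_smul_right, inner_zero_right] using
    congrArg (fun y => ⟪x, y⟫) h.sum_weight_smul

theorem IsBalanced.inner_nonneg_of_forall_le {ι : Type*} [Fintype ι] {w : ι → ℝ} {n : ι → E}
    (h : IsBalanced w n) {x : E} {i : ι} (hi : ∀ j, ⟪x, n j⟫ ≤ ⟪x, n i⟫) : 0 ≤ ⟪x, n i⟫ :=
  calc 0 = ∑ j, w j * ⟪x, n j⟫ := (h.sum_weight_mul_inner x).symm
    _ ≤ ∑ j, w j * ⟪x, n i⟫ :=
        Finset.sum_le_sum fun j _ => mul_le_mul_of_nonneg_left (hi j) (h.weight_nonneg j)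
    _ = ⟪x, n i⟫ := by rw [← Finset.sum_mul, h.sum_weight, one_mul]

/-- The outward unit normals at the points where the sphere of centre `p` and radius `r` meets the
complement of `Ω`. -/
def contactNormals (Ω : Set E) (p : E) (r : ℝ) : Set E :=
  {e | ‖e‖ = 1 ∧ p + r • e ∉ Ω}

theorem norm_le_inner_of_forall_mem_ball_le {g p e : E} {r : ℝ} (hr : 0 < r)
    (h : ∀ x ∈ Metric.ball p r, ⟪g, x⟫ ≤ ⟪g, p + r • e⟫) : ‖g‖ ≤ ⟪g, e⟫ := by
  rcases eq_or_ne g 0 with rfl | hg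
  · simp
  have hg0 : 0 < ‖g‖ := norm_pos_iff.2 hg
  have hclosed : Metric.closedBall p r ⊆ {x | ⟪g, x⟫ ≤ ⟪g, p + r • e⟫} := by
    rw [← closure_ball p hr.ne']
    exact closure_minimal h (isClosed_le (by fun_prop) (by fun_prop))
  have hmem : p + (r / ‖g‖) • g ∈ Metric.closedBall p r := by
    simp [norm_smul, abs_of_pos hr, hg0.ne']
  have hle := hclosed hmem
  simp only [mem_ofPred_eq, inner_add_right, inner_smul_right, real_inner_self_eq_norm_sq] at hle
  have hval : r / ‖g‖ * ‖g‖ ^ 2 = r * ‖g‖ := by field_simp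
  exact le_of_mul_le_mul_left (by linarith) hr

theorem inner_lt_of_mem_contactNormals [CompleteSpace E] {Ω : Set E} (hopen : IsOpen Ω)
    (hconv : Convex ℝ Ω) {p e : E} {r : ℝ} (hr : 0 < r) (hball : Metric.ball p r ⊆ Ω)
    (he : e ∈ contactNormals Ω p r) {x : E} (hx : x ∈ Ω) : ⟪x - p, e⟫ < r := by
  obtain ⟨he1, hnot⟩ := he
  obtain ⟨f, hf⟩ := geometric_hahn_banach_open_point hconv hopen hnot
  obtain ⟨g, rfl⟩ := (InnerProductSpace.toDual ℝ E).surjective f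
  simp only [InnerProductSpace.toDual_apply_apply] at hf
  have hge : ‖g‖ ≤ ⟪g, e⟫ :=
    norm_le_inner_of_forall_mem_ball_le hr fun y hy => (hf y (hball hy)).le
  have hparallel : g = ‖g‖ • e := by
    have hle := real_inner_le_norm g e
    rw [he1, mul_one] at hle
    simpa [he1] using (inner_eq_norm_mul_iff_real (x := g) (y := e)).1
      (by rw [he1, mul_one]; exact le_antisymm hle hge)
  have hlt := hf x hx
  rw [hparallel, real_inner_smul_left, real_inner_smul_left] at hlt
  have hlt' := lt_of_mul_lt_mul_left hlt (norm_nonneg g)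
  rw [inner_add_right, inner_smul_right, real_inner_self_eq_norm_sq, he1] at hlt'
  rw [real_inner_comm, inner_sub_right]
  linarith

theorem exists_fin_convexCombination_of_mem_convexHull {V : Type*} [AddCommGroup V] [Module ℝ V]
    [FiniteDimensional ℝ V] {A : Set V} {x : V} (hx : x ∈ convexHull ℝ A) {N : ℕ}
    (hN : Module.finrank ℝ V < N) :
    ∃ w ∈ stdSimplex ℝ (Fin N), ∃ z : Fin N → V, (∀ i, z i ∈ A) ∧ ∑ i, w i • z i = x := by
  obtain ⟨ι, _, z, w, hz, haff, hw, hsum, rfl⟩ := eq_pos_convex_span_of_mem_convexHull hx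
  have hcard : Fintype.card ι ≤ N := by
    have := haff.card_le_finrank_succ
    have := Submodule.finrank_le (vectorSpan ℝ (range z))
    omega
  obtain ⟨g⟩ : Nonempty (ι ↪ Fin N) := Function.Embedding.nonempty_of_card_le (by simpa)
  obtain ⟨i₀⟩ : Nonempty ι := by
    by_contra h
    rw [not_nonempty_iff] at h
    simp at hsum
  have hext : ∀ k ∉ range g, Function.extend g w 0 k = 0 := fun k hk => by
    rw [Function.extend_apply' _ _ _ hk, Pi.zero_apply]
  refine ⟨Function.extend g w 0, ⟨fun k => ?_, ?_⟩, Function.extend g z fun _ => z i₀,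
    fun k => ?_, ?_⟩
  · by_cases hk : k ∈ range g
    · obtain ⟨i, rfl⟩ := hk
      exact g.injective.extend_apply w 0 i ▸ (hw i).le
    · exact (hext k hk).ge
  · rw [← hsum]
    exact (Fintype.sum_of_injective g g.injective _ _ hext
      fun i => (g.injective.extend_apply w 0 i).symm).symm
  · by_cases hk : k ∈ range g
    · obtain ⟨i, rfl⟩ := hk
      exact g.injective.extend_apply z _ i ▸ hz ⟨i, rfl⟩
    · exact Function.extend_apply' _ _ _ hk ▸ hz ⟨i₀, rfl⟩
  · refine (Fintype.sum_of_injective g g.injective _ _ (fun k hk => ?_) fun i => ?_).symm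
    · rw [hext k hk, zero_smul]
    · rw [g.injective.extend_apply, g.injective.extend_apply]

theorem isCompact_convexHull_of_isCompact {V : Type*} [AddCommGroup V] [Module ℝ V]
    [FiniteDimensional ℝ V] [TopologicalSpace V] [ContinuousAdd V] [ContinuousSMul ℝ V]
    {A : Set V} (hA : IsCompact A) : IsCompact (convexHull ℝ A) := by
  set N := Module.finrank ℝ V + 1
  have himage : convexHull ℝ A = (fun q : (Fin N → ℝ) × (Fin N → V) => ∑ i, q.1 i • q.2 i) ''
      (stdSimplex ℝ (Fin N) ×ˢ Set.pi univ fun _ => A) := by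
    ext x
    constructor
    · intro hx
      obtain ⟨w, hw, z, hz, rfl⟩ :=
        exists_fin_convexCombination_of_mem_convexHull hx (N := N) (Nat.lt_succ_self _)
      exact ⟨(w, z), ⟨hw, fun i _ => hz i⟩, rfl⟩
    · rintro ⟨⟨w, z⟩, ⟨hw, hz⟩, rfl⟩
      exact (convex_convexHull ℝ A).sum_mem (fun i _ => hw.1 i) hw.2
        fun i _ => subset_convexHull ℝ A (hz i trivial)
  rw [himage]
  exact ((isCompact_stdSimplex ℝ (Fin N)).prod (isCompact_univ_pi fun _ => hA)).image
    (by fun_prop)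

variable {Ω : Set E}

theorem le_norm_sub_of_ball_subset {V : Type*} [SeminormedAddCommGroup V] {Ω : Set V} {p z : V}
    {r : ℝ} (hball : Metric.ball p r ⊆ Ω) (hz : z ∉ Ω) : r ≤ ‖z - p‖ := by
  by_contra! h
  exact hz (hball (by rwa [Metric.mem_ball, dist_eq_norm]))

theorem exists_notMem_shifted_ball_inner_nonpos {p : E} {r : ℝ} (hball : Metric.ball p r ⊆ Ω)
    (hmax : ∀ q, ∃ z ∉ Ω, dist q z ≤ r) (d : E) {η : ℝ} (hη : 0 < η) :
    ∃ z ∉ Ω, ‖(z - p) + η • d‖ ≤ r ∧ ⟪d, z - p⟫ ≤ 0 := by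
  obtain ⟨z, hz, hzr⟩ := hmax (p - η • d)
  have hshift : ‖(z - p) + η • d‖ ≤ r := by
    rwa [dist_comm, dist_eq_norm, ← sub_add] at hzr
  refine ⟨z, hz, hshift, ?_⟩
  have hsq : ‖(z - p) + η • d‖ ^ 2 ≤ ‖z - p‖ ^ 2 :=
    pow_le_pow_left₀ (norm_nonneg _) (hshift.trans (le_norm_sub_of_ball_subset hball hz)) 2
  rw [norm_add_sq_real, inner_smul_right, real_inner_comm] at hsq
  by_contra! hpos
  nlinarith [mul_pos hη hpos, sq_nonneg ‖η • d‖]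

variable [FiniteDimensional ℝ E]

theorem exists_largest_ball [Nontrivial E] (hne : Ω.Nonempty) (hopen : IsOpen Ω)
    (hbd : Bornology.IsBounded Ω) :
    ∃ p r, 0 < r ∧ Metric.ball p r ⊆ Ω ∧ ∀ q, ∃ z ∉ Ω, dist q z ≤ r := by
  have hcompl : (Ωᶜ).Nonempty := by
    rw [nonempty_compl]
    rintro rfl
    exact NormedSpace.unbounded_univ ℝ E hbd
  have hclosed : IsClosed Ωᶜ := hopen.isClosed_compl
  obtain ⟨p, -, hmax⟩ := hbd.isCompact_closure.exists_isMaxOn (hne.mono subset_closure)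
    (f := fun x => Metric.infDist x Ωᶜ) (Metric.continuous_infDist_pt _).continuousOn
  refine ⟨p, Metric.infDist p Ωᶜ, ?_, fun x hx => ?_, fun q => ?_⟩
  · obtain ⟨x, hx⟩ := hne
    exact ((hclosed.notMem_iff_infDist_pos hcompl).1 (not_not_intro hx)).trans_le
      (hmax (subset_closure hx))
  · by_contra hxn
    rw [Metric.mem_ball, dist_comm] at hx
    exact hx.not_ge (Metric.infDist_le_dist_of_mem hxn)
  · by_cases hq : q ∈ closure Ω
    · obtain ⟨z, hz, hzq⟩ := hclosed.exists_infDist_eq_dist hcompl q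
      exact ⟨z, hz, hzq ▸ hmax hq⟩
    · exact ⟨q, fun h => hq (subset_closure h), by simpa using Metric.infDist_nonneg⟩

-- Moving the centre to `p - η • d` cannot free the ball; let `η → 0`.
theorem exists_contactNormal_inner_nonpos (hopen : IsOpen Ω) {p : E} {r : ℝ} (hr : 0 < r)
    (hball : Metric.ball p r ⊆ Ω) (hmax : ∀ q, ∃ z ∉ Ω, dist q z ≤ r) (d : E) :
    ∃ e ∈ contactNormals Ω p r, ⟪d, e⟫ ≤ 0 := by
  set η : ℕ → ℝ := fun n => 1 / ((n : ℝ) + 1) with hηdef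
  have hηpos (n : ℕ) : 0 < η n := by positivity
  have hη : Tendsto η atTop (nhds 0) := tendsto_one_div_add_atTop_nhds_zero_nat
  choose x hxΩ hshift hinner using
    fun n => exists_notMem_shifted_ball_inner_nonpos hball hmax d (hηpos n)
  have hbounded (n : ℕ) : x n ∈ Metric.closedBall p (r + ‖d‖) := by
    have hη1 : η n ≤ 1 := by
      simpa [hηdef] using one_div_le_one_div_of_le one_pos (by simp : (1 : ℝ) ≤ (n : ℝ) + 1)
    rw [Metric.mem_closedBall, dist_eq_norm]
    calc ‖x n - p‖ = ‖((x n - p) + η n • d) - η n • d‖ := by rw [add_sub_cancel_right]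
      _ ≤ ‖(x n - p) + η n • d‖ + ‖η n • d‖ := norm_sub_le _ _
      _ ≤ r + ‖d‖ := by
          rw [norm_smul, norm_of_nonneg (hηpos n).le]
          exact add_le_add (hshift n) (mul_le_of_le_one_left (norm_nonneg d) hη1)
  obtain ⟨z, -, φ, hφ, hz⟩ := (isCompact_closedBall p (r + ‖d‖)).tendsto_subseq hbounded
  have hzΩ : z ∉ Ω := hopen.isClosed_compl.mem_of_tendsto hz (Eventually.of_forall fun n => hxΩ _)
  have hzp : Tendsto (fun n => x (φ n) - p) atTop (nhds (z - p)) := hz.sub_const p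
  have hzr : ‖z - p‖ = r := by
    refine le_antisymm ?_ (le_norm_sub_of_ball_subset hball hzΩ)
    have hlim := (hzp.add ((hη.comp hφ.tendsto_atTop).smul_const d)).norm
    rw [zero_smul, add_zero] at hlim
    exact le_of_tendsto hlim (Eventually.of_forall fun n => hshift _)
  refine ⟨r⁻¹ • (z - p), ⟨?_, ?_⟩, ?_⟩
  · rw [norm_smul, hzr, norm_inv, norm_of_nonneg hr.le, inv_mul_cancel₀ hr.ne']
  · rwa [smul_inv_smul₀ hr.ne', add_sub_cancel]
  · rw [inner_smul_right]
    exact mul_nonpos_of_nonneg_of_nonpos (inv_nonneg.2 hr.le)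
      (le_of_tendsto ((tendsto_const_nhds (x := d)).inner hzp)
        (Eventually.of_forall fun n => hinner _))

theorem zero_mem_convexHull_contactNormals (hopen : IsOpen Ω) {p : E} {r : ℝ} (hr : 0 < r)
    (hball : Metric.ball p r ⊆ Ω) (hmax : ∀ q, ∃ z ∉ Ω, dist q z ≤ r) :
    (0 : E) ∈ convexHull ℝ (contactNormals Ω p r) := by
  have hcompact : IsCompact (contactNormals Ω p r) := by
    have hpre : IsClosed ((fun e : E => p + r • e) ⁻¹' Ωᶜ) :=
      hopen.isClosed_compl.preimage (by fun_prop)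
    convert (isCompact_sphere (0 : E) 1).inter_right hpre using 1
    ext e
    simp [contactNormals]
  by_contra h0
  obtain ⟨f, s, hs0, hs⟩ := geometric_hahn_banach_point_closed (convex_convexHull ℝ _)
    (isCompact_convexHull_of_isCompact hcompact).isClosed h0
  rw [map_zero] at hs0
  obtain ⟨d, rfl⟩ := (InnerProductSpace.toDual ℝ E).surjective f
  obtain ⟨e, he, hde⟩ := exists_contactNormal_inner_nonpos hopen hr hball hmax d
  have hpos := hs e (subset_convexHull ℝ _ he)
  rw [InnerProductSpace.toDual_apply_apply] at hpos
  linarith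

theorem exists_inscribed_ball_balanced [Nontrivial E] (hne : Ω.Nonempty) (hopen : IsOpen Ω)
    (hbd : Bornology.IsBounded Ω) (hconv : Convex ℝ Ω) {N : ℕ} (hN : Module.finrank ℝ E < N) :
    ∃ (p : E) (r : ℝ) (w : Fin N → ℝ) (n : Fin N → E), 0 < r ∧ Metric.ball p r ⊆ Ω ∧
      IsBalanced w n ∧ ∀ i, ∀ x ∈ Ω, ⟪x - p, n i⟫ < r := by
  obtain ⟨p, r, hr, hball, hmax⟩ := exists_largest_ball hne hopen hbd
  obtain ⟨w, hw, n, hn, hwn⟩ := exists_fin_convexCombination_of_mem_convexHull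
    (zero_mem_convexHull_contactNormals hopen hr hball hmax) hN
  exact ⟨p, r, w, n, hr, hball, ⟨fun i => (hn i).1, hw.1, hw.2, hwn⟩,
    fun i _ hx => inner_lt_of_mem_contactNormals hopen hconv hr hball (hn i) hx⟩

end InscribedBall

section Frame

/-- The point of the plane with coordinates `q` in the orthonormal frame `b` based at `p`. -/
def framePoint (p : E2) (b : OrthonormalBasis (Fin 2) ℝ E2) (q : ℝ × ℝ) : E2 :=
  p + (q.1 • b 0 + q.2 • b 1)

variable (p : E2) (b : OrthonormalBasis (Fin 2) ℝ E2)

@[fun_prop]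
theorem continuous_framePoint : Continuous (framePoint p b) := by
  unfold framePoint
  fun_prop

theorem inner_framePoint_sub_zero (q : ℝ × ℝ) : ⟪framePoint p b q - p, b 0⟫ = q.1 := by
  simp [framePoint, inner_add_left, inner_smul_left, b.inner_eq_ite]

theorem inner_framePoint_sub_one (q : ℝ × ℝ) : ⟪framePoint p b q - p, b 1⟫ = q.2 := by
  simp [framePoint, inner_add_left, inner_smul_left, b.inner_eq_ite]

theorem framePoint_inner_sub (x : E2) :
    framePoint p b (⟪x - p, b 0⟫, ⟪x - p, b 1⟫) = x := by
  have hrepr := b.sum_repr' (x - p)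
  rw [Fin.sum_univ_two, real_inner_comm, real_inner_comm _ (b 1)] at hrepr
  rw [framePoint, hrepr, add_sub_cancel]

variable {b} in
theorem norm_sq_eq_inner_sq_add_inner_sq (x : E2) : ‖x‖ ^ 2 = ⟪x, b 0⟫ ^ 2 + ⟪x, b 1⟫ ^ 2 := by
  simpa [Fin.sum_univ_two] using (b.sum_sq_norm_inner_left x).symm

theorem norm_framePoint_sub_sq (q : ℝ × ℝ) : ‖framePoint p b q - p‖ ^ 2 = q.1 ^ 2 + q.2 ^ 2 := by
  rw [norm_sq_eq_inner_sq_add_inner_sq (b := b), inner_framePoint_sub_zero,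
    inner_framePoint_sub_one]

theorem framePoint_smul_add_smul {α β : ℝ} (hαβ : α + β = 1) (q q' : ℝ × ℝ) :
    framePoint p b (α • q + β • q') = α • framePoint p b q + β • framePoint p b q' := by
  obtain rfl : β = 1 - α := by linarith
  simp only [framePoint, Prod.fst_add, Prod.snd_add, Prod.smul_fst, Prod.smul_snd, smul_eq_mul]
  module

theorem exists_orthonormalBasis_zero_eq {e : E2} (he : ‖e‖ = 1) :
    ∃ b : OrthonormalBasis (Fin 2) ℝ E2, b 0 = e := by
  obtain ⟨b, hb⟩ := Orthonormal.exists_orthonormalBasis_extension_of_card_eq (𝕜 := ℝ) (E := E2)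
    (ι := Fin 2) (by simp) (v := fun _ => e) (s := {0})
    ⟨fun _ => he, fun i j hij => absurd (Subsingleton.elim i j) hij⟩
  exact ⟨b, hb 0 rfl⟩

theorem exists_orthonormalBasis_one_eq {e : E2} (he : ‖e‖ = 1) :
    ∃ b : OrthonormalBasis (Fin 2) ℝ E2, b 1 = e := by
  obtain ⟨b, rfl⟩ := exists_orthonormalBasis_zero_eq he
  exact ⟨b.reindex (Equiv.swap 0 1), by simp⟩

theorem measurePreserving_framePoint : MeasurePreserving (framePoint p b) volume volume := by
  have hbasis := b.measurePreserving_repr_symm.comp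
    ((EuclideanSpace.volume_preserving_symm_measurableEquiv_toLp (Fin 2)).symm.comp
      (volume_preserving_finTwoArrow ℝ).symm)
  convert (measurePreserving_add_left volume p).comp hbasis using 1
  ext q i
  simp [framePoint, ← OrthonormalBasis.sum_repr_symm, Fin.sum_univ_two,
    MeasurableEquiv.finTwoArrow]

theorem measurableEmbedding_framePoint : MeasurableEmbedding (framePoint p b) := by
  refine (continuous_framePoint p b).measurableEmbedding fun q q' h => Prod.ext ?_ ?_
  · rw [← inner_framePoint_sub_zero p b q, h, inner_framePoint_sub_zero]
  · rw [← inner_framePoint_sub_one p b q, h, inner_framePoint_sub_one]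

theorem integral_eq_integral_framePoint (F : E2 → ℝ) : ∫ x, F x = ∫ q, F (framePoint p b q) :=
  ((measurePreserving_framePoint p b).integral_comp (measurableEmbedding_framePoint p b) F).symm

theorem integrable_comp_framePoint {F : E2 → ℝ} (hF : Integrable F) :
    Integrable fun q => F (framePoint p b q) :=
  ((measurePreserving_framePoint p b).integrable_comp_emb (measurableEmbedding_framePoint p b)).2 hF

theorem hasDerivAt_framePoint_fst (s y : ℝ) :
    HasDerivAt (fun s => framePoint p b (s, y)) (b 0) s := by
  simpa [framePoint] using (((hasDerivAt_id s).smul_const (b 0)).add_const (y • b 1)).const_add p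

theorem hasDerivAt_framePoint_snd (s y : ℝ) :
    HasDerivAt (fun y => framePoint p b (s, y)) (b 1) y := by
  simpa [framePoint] using (((hasDerivAt_id y).smul_const (b 1)).const_add (s • b 0)).const_add p

/-- The slice of `K` along the line of points with first coordinate `s` in the frame `(p, b)`,
parametrised by the second coordinate. -/
def frameSlice (K : Set E2) (p : E2) (b : OrthonormalBasis (Fin 2) ℝ E2) (s : ℝ) : Set ℝ :=
  {y | framePoint p b (s, y) ∈ K}

variable {K : Set E2} {F : E2 → ℝ}

theorem measurableSet_frameSlice (hK : MeasurableSet K) (s : ℝ) :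
    MeasurableSet (frameSlice K p b s) :=
  hK.preimage (by fun_prop : Continuous fun y => framePoint p b (s, y)).measurable

theorem setIntegral_frameSlice_eq_integral_indicator (hK : MeasurableSet K) (s : ℝ) :
    ∫ y in frameSlice K p b s, F (framePoint p b (s, y)) =
      ∫ y, K.indicator F (framePoint p b (s, y)) :=
  (integral_indicator (measurableSet_frameSlice p b hK s)).symm

theorem integrable_indicator_comp_framePoint (hK : MeasurableSet K) (hF : IntegrableOn F K) :
    Integrable (fun q => K.indicator F (framePoint p b q)) (volume.prod volume) := by
  rw [← Measure.volume_eq_prod]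
  exact integrable_comp_framePoint p b ((integrable_indicator_iff hK).2 hF)

theorem setIntegral_eq_integral_setIntegral_frameSlice (hK : MeasurableSet K)
    (hF : IntegrableOn F K) :
    ∫ x in K, F x = ∫ s, ∫ y in frameSlice K p b s, F (framePoint p b (s, y)) := by
  simp only [setIntegral_frameSlice_eq_integral_indicator p b hK]
  rw [← integral_indicator hK, integral_eq_integral_framePoint p b, Measure.volume_eq_prod,
    integral_prod _ (integrable_indicator_comp_framePoint p b hK hF)]

theorem integrable_setIntegral_frameSlice (hK : MeasurableSet K) (hF : IntegrableOn F K) :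
    Integrable fun s => ∫ y in frameSlice K p b s, F (framePoint p b (s, y)) := by
  simp only [setIntegral_frameSlice_eq_integral_indicator p b hK]
  exact (integrable_indicator_comp_framePoint p b hK hF).integral_prod_left

end Frame

section HerschProtter

-- Integrate `(-k tan(ky) v²)' ≤ v'² - k² v²`, which is `(v' + k tan(ky) v)² ≥ 0`.
theorem sq_mul_integral_sq_le_of_eq_zero_right {v v' : ℝ → ℝ} (hv : ∀ y, HasDerivAt v (v' y) y)
    (hv' : Continuous v') {a r k : ℝ} (ha : 0 ≤ a) (har : a ≤ r) (hk : 0 < k)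
    (hkr : k * r < π / 2) (hvr : v r = 0) :
    k ^ 2 * ∫ y in a..r, v y ^ 2 ≤ ∫ y in a..r, v' y ^ 2 := by
  have hvc : Continuous v := continuous_iff_continuousAt.2 fun y => (hv y).continuousAt
  have hcos : ∀ y ∈ Icc a r, 0 < cos (k * y) := fun y hy =>
    cos_pos_of_mem_Ioo ⟨by linarith [mul_nonneg hk.le (ha.trans hy.1), pi_pos],
      (mul_le_mul_of_nonneg_left hy.2 hk.le).trans_lt hkr⟩
  have hderiv : ∀ y ∈ Icc a r, HasDerivAt (fun y => -k * tan (k * y) * v y ^ 2)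
      (-k * (1 / cos (k * y) ^ 2 * k) * v y ^ 2 + -k * tan (k * y) * (2 * v y * v' y)) y := by
    intro y hy
    have hlin : HasDerivAt (fun y => k * y) k y := by simpa using (hasDerivAt_id y).const_mul k
    have htan := ((Real.hasDerivAt_tan (hcos y hy).ne').comp y hlin).const_mul (-k)
    exact (htan.mul ((hv y).pow 2)).congr_deriv (by simp)
  have hpointwise : ∀ y ∈ Ioo a r,
      -k * (1 / cos (k * y) ^ 2 * k) * v y ^ 2 + -k * tan (k * y) * (2 * v y * v' y) ≤
        v' y ^ 2 - k ^ 2 * v y ^ 2 := by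
    intro y hy
    have hsec : 1 / cos (k * y) ^ 2 = 1 + tan (k * y) ^ 2 := by
      rw [one_div, ← inv_one_add_tan_sq (hcos y (Ioo_subset_Icc_self hy)).ne', inv_inv]
    rw [hsec]
    nlinarith [sq_nonneg (v' y + k * tan (k * y) * v y)]
  have hintg := intervalIntegral.sub_le_integral_of_hasDeriv_right_of_le har
    (fun y hy => (hderiv y hy).continuousAt.continuousWithinAt)
    (fun y hy => (hderiv y (Ioo_subset_Icc_self hy)).hasDerivWithinAt)
    (by fun_prop : Continuous fun y => v' y ^ 2 - k ^ 2 * v y ^ 2).continuousOn.integrableOn_Icc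
    hpointwise
  rw [intervalIntegral.integral_sub ((by fun_prop : Continuous _).intervalIntegrable _ _)
    ((by fun_prop : Continuous _).intervalIntegrable _ _), intervalIntegral.integral_const_mul,
    hvr] at hintg
  have htan : 0 ≤ tan (k * a) := tan_nonneg_of_nonneg_of_le_pi_div_two (mul_nonneg hk.le ha)
    ((mul_le_mul_of_nonneg_left har hk.le).trans hkr.le)
  have : 0 ≤ k * tan (k * a) * v a ^ 2 := by positivity
  linarith

theorem setIntegral_Ioi_eq_intervalIntegral {f : ℝ → ℝ} {a r : ℝ} (har : a ≤ r)
    (hf : ∀ y, r < y → f y = 0) : ∫ y in Ioi a, f y = ∫ y in a..r, f y := by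
  rw [intervalIntegral.integral_of_le har]
  refine setIntegral_eq_of_subset_of_forall_sdiff_eq_zero measurableSet_Ioi Ioc_subset_Ioi_self ?_
  rintro y ⟨hay, hy⟩
  exact hf y (not_le.1 fun hyr => hy ⟨hay, hyr⟩)

theorem sq_mul_setIntegral_Ioi_sq_le {v v' : ℝ → ℝ} (hv : ∀ y, HasDerivAt v (v' y) y)
    (hv' : Continuous v') {a r k : ℝ} (ha : 0 ≤ a) (hk : 0 < k) (hkr : k * r < π / 2)
    (hv0 : ∀ y, r ≤ y → v y = 0) :
    k ^ 2 * ∫ y in Ioi a, v y ^ 2 ≤ ∫ y in Ioi a, v' y ^ 2 := by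
  rcases le_total r a with hra | har
  · have hzero : ∫ y in Ioi a, v y ^ 2 = 0 :=
      setIntegral_eq_zero_of_forall_eq_zero fun y hy => by
        rw [hv0 y (hra.trans (le_of_lt hy)), zero_pow two_ne_zero]
    rw [hzero, mul_zero]
    exact integral_nonneg fun y => sq_nonneg _
  have hv'0 : ∀ y, r < y → v' y = 0 := fun y hy => by
    refine (hv y).unique ((hasDerivAt_const y (0 : ℝ)).congr_of_eventuallyEq ?_)
    filter_upwards [lt_mem_nhds hy] with z hz using hv0 z hz.le
  rw [setIntegral_Ioi_eq_intervalIntegral har fun y hy => by rw [hv0 y hy.le, sq, mul_zero],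
    setIntegral_Ioi_eq_intervalIntegral har fun y hy => by rw [hv'0 y hy, sq, mul_zero]]
  exact sq_mul_integral_sq_le_of_eq_zero_right hv hv' ha har hk hkr (hv0 r le_rfl)

theorem ae_eq_Ioi_csInf_of_isUpperSet {Y : Set ℝ} (hY : IsUpperSet Y) (hne : Y.Nonempty)
    (hbdd : BddBelow Y) : Y =ᵐ[volume] Ioi (sInf Y) := by
  have hsub : Ioi (sInf Y) ⊆ Y := fun y hy => by
    obtain ⟨z, hz, hzy⟩ := exists_lt_of_csInf_lt hne hy
    exact hY hzy.le hz
  have hsup : Y ⊆ Ici (sInf Y) := fun y hy => csInf_le hbdd hy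
  exact (hsup.eventuallyLE.trans_eq Ioi_ae_eq_Ici.symm).antisymm hsub.eventuallyLE

theorem sq_mul_setIntegral_sq_le_of_isUpperSet {v v' : ℝ → ℝ} (hv : ∀ y, HasDerivAt v (v' y) y)
    (hv' : Continuous v') {r k : ℝ} (hk : 0 < k) (hkr : k * r < π / 2)
    (hv0 : ∀ y, r ≤ y → v y = 0) {Y : Set ℝ} (hY : IsUpperSet Y) (hY0 : ∀ y ∈ Y, 0 ≤ y) :
    k ^ 2 * ∫ y in Y, v y ^ 2 ≤ ∫ y in Y, v' y ^ 2 := by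
  rcases Y.eq_empty_or_nonempty with rfl | hne
  · simp
  have hae := ae_eq_Ioi_csInf_of_isUpperSet hY hne ⟨0, hY0⟩
  rw [setIntegral_congr_set hae, setIntegral_congr_set hae]
  exact sq_mul_setIntegral_Ioi_sq_le hv hv' (le_csInf hne hY0) hk hkr hv0

theorem integrable_comp_of_hasCompactSupport {F : Type*} [TopologicalSpace F] [Zero F]
    {f : E2 → F} (hf : Continuous f) (hcs : HasCompactSupport f) {g : F → ℝ} (hg : Continuous g)
    (hg0 : g 0 = 0) : Integrable fun x => g (f x) :=
  (hg.comp hf).integrable_of_hasCompactSupport (hcs.comp_left hg0)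

theorem integrable_sq_of_hasCompactSupport {u : E2 → ℝ} (hu : Continuous u)
    (hcs : HasCompactSupport u) : Integrable fun x => u x ^ 2 :=
  integrable_comp_of_hasCompactSupport hu hcs (continuous_pow 2) (zero_pow two_ne_zero)

theorem integrable_norm_fderiv_sq_of_hasCompactSupport {u : E2 → ℝ} (hu : ContDiff ℝ 1 u)
    (hcs : HasCompactSupport u) : Integrable fun x => ‖fderiv ℝ u x‖ ^ 2 :=
  integrable_comp_of_hasCompactSupport (hu.continuous_fderiv one_ne_zero) (hcs.fderiv ℝ)
    (continuous_norm.pow 2) (by simp)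

theorem integrable_fderiv_apply_sq_of_hasCompactSupport {u : E2 → ℝ} (hu : ContDiff ℝ 1 u)
    (hcs : HasCompactSupport u) (e : E2) : Integrable fun x => fderiv ℝ u x e ^ 2 :=
  integrable_comp_of_hasCompactSupport (g := fun L : E2 →L[ℝ] ℝ => L e ^ 2)
    (hu.continuous_fderiv one_ne_zero) (hcs.fderiv ℝ) (by fun_prop) (by simp)

theorem sq_apply_le_sq_norm {V : Type*} [SeminormedAddCommGroup V] [NormedSpace ℝ V]
    (L : V →L[ℝ] ℝ) {e : V} (he : ‖e‖ = 1) : L e ^ 2 ≤ ‖L‖ ^ 2 := by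
  rw [← sq_abs (L e), ← Real.norm_eq_abs]
  exact pow_le_pow_left₀ (norm_nonneg _) (by simpa [he] using L.le_opNorm e) 2

theorem sq_mul_setIntegral_sq_le_of_forall_add_smul_mem {u : E2 → ℝ} (hu : ContDiff ℝ 1 u)
    (hcs : HasCompactSupport u) {p : E2} {b : OrthonormalBasis (Fin 2) ℝ E2} {r k : ℝ}
    (hu0 : ∀ x, r ≤ ⟪x - p, b 1⟫ → u x = 0) (hk : 0 < k) (hkr : k * r < π / 2) {C : Set E2}
    (hC : MeasurableSet C) (hC0 : ∀ x ∈ C, 0 ≤ ⟪x - p, b 1⟫)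
    (hCup : ∀ x ∈ C, ∀ t : ℝ, 0 ≤ t → x + t • b 1 ∈ C) :
    k ^ 2 * ∫ x in C, u x ^ 2 ≤ ∫ x in C, ‖fderiv ℝ u x‖ ^ 2 := by
  have : Continuous (fderiv ℝ u) := hu.continuous_fderiv one_ne_zero
  have hu2 := integrable_sq_of_hasCompactSupport hu.continuous hcs
  have hdir := integrable_fderiv_apply_sq_of_hasCompactSupport hu hcs (b 1)
  calc k ^ 2 * ∫ x in C, u x ^ 2
      = ∫ s, k ^ 2 * ∫ y in frameSlice C p b s, u (framePoint p b (s, y)) ^ 2 := by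
        rw [integral_const_mul,
          setIntegral_eq_integral_setIntegral_frameSlice p b hC hu2.integrableOn]
    _ ≤ ∫ s, ∫ y in frameSlice C p b s, fderiv ℝ u (framePoint p b (s, y)) (b 1) ^ 2 := by
        refine integral_mono
          ((integrable_setIntegral_frameSlice p b hC hu2.integrableOn).const_mul _)
          (integrable_setIntegral_frameSlice p b hC hdir.integrableOn) fun s => ?_
        refine sq_mul_setIntegral_sq_le_of_isUpperSet
          (fun y => (hu.differentiable one_ne_zero _).hasFDerivAt.comp_hasDerivAt y
            (hasDerivAt_framePoint_snd p b s y)) (by fun_prop) hk hkr (fun y hy => hu0 _ ?_) ?_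
          fun y hy => ?_
        · rwa [inner_framePoint_sub_one]
        · intro y z hyz hy
          have hmem := hCup _ hy (z - y) (sub_nonneg.2 hyz)
          rwa [framePoint, add_assoc, add_assoc, ← add_smul, add_sub_cancel] at hmem
        · simpa only [inner_framePoint_sub_one] using hC0 _ hy
    _ = ∫ x in C, fderiv ℝ u x (b 1) ^ 2 :=
        (setIntegral_eq_integral_setIntegral_frameSlice p b hC hdir.integrableOn).symm
    _ ≤ ∫ x in C, ‖fderiv ℝ u x‖ ^ 2 :=
        integral_mono hdir.integrableOn
          (integrable_norm_fderiv_sq_of_hasCompactSupport hu hcs).integrableOn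
          fun x => sq_apply_le_sq_norm _ (b.norm_eq_one 1)

/-- The points `x` at which `⟪x - p, n i⟫` is the largest of the numbers `⟪x - p, n j⟫`, the
smallest such index being chosen in case of a tie: these cells partition the space. -/
def dominanceCell {ι E : Type*} [LinearOrder ι] [NormedAddCommGroup E] [InnerProductSpace ℝ E]
    (p : E) (n : ι → E) (i : ι) : Set E :=
  {x | (∀ j, ⟪x - p, n j⟫ ≤ ⟪x - p, n i⟫) ∧ ∀ j < i, ⟪x - p, n j⟫ < ⟪x - p, n i⟫}

section DominanceCell

variable {ι E : Type*} [LinearOrder ι] [NormedAddCommGroup E] [InnerProductSpace ℝ E]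
  {p : E} {n : ι → E}

theorem pairwise_disjoint_dominanceCell :
    Pairwise (Function.onFun Disjoint (dominanceCell p n)) := by
  intro i j hij
  rcases lt_or_gt_of_ne hij with hlt | hlt
  · exact disjoint_left.2 fun x hi hj => (hj.2 i hlt).not_ge (hi.1 j)
  · exact disjoint_left.2 fun x hi hj => (hi.2 j hlt).not_ge (hj.1 i)

theorem iUnion_dominanceCell [Finite ι] [Nonempty ι] : ⋃ i, dominanceCell p n i = univ := by
  have := Fintype.ofFinite ι
  refine eq_univ_of_forall fun x => mem_iUnion.2 ?_
  obtain ⟨i₀, -, hi₀⟩ := Finset.univ.exists_max_image (fun i => ⟪x - p, n i⟫) Finset.univ_nonempty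
  set M := ⟪x - p, n i₀⟫
  obtain ⟨i, hi, hmin⟩ := (Finset.univ.filter fun i => ⟪x - p, n i⟫ = M).exists_min_image id
    ⟨i₀, by simp [M]⟩
  simp only [Finset.mem_filter_univ, id] at hi hmin
  refine ⟨i, fun j => hi ▸ hi₀ j (Finset.mem_univ j), fun j hj => ?_⟩
  exact hi ▸ (hi₀ j (Finset.mem_univ j)).lt_of_ne fun h => hj.not_ge (hmin j h)

theorem measurableSet_dominanceCell [Finite ι] [MeasurableSpace E] [OpensMeasurableSpace E]
    (i : ι) : MeasurableSet (dominanceCell p n i) := by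
  have hsplit : dominanceCell p n i = (⋂ j, {x | ⟪x - p, n j⟫ ≤ ⟪x - p, n i⟫}) ∩
      ⋂ j, ⋂ (_ : j < i), {x | ⟪x - p, n j⟫ < ⟪x - p, n i⟫} := by
    ext x
    simp [dominanceCell]
  rw [hsplit]
  have hle (j : ι) : MeasurableSet {x | ⟪x - p, n j⟫ ≤ ⟪x - p, n i⟫} :=
    (isClosed_le (by fun_prop) (by fun_prop)).measurableSet
  have hlt (j : ι) : MeasurableSet {x | ⟪x - p, n j⟫ < ⟪x - p, n i⟫} :=
    (isOpen_lt (by fun_prop) (by fun_prop)).measurableSet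
  exact (MeasurableSet.iInter hle).inter
    (MeasurableSet.iInter fun j => MeasurableSet.iInter fun _ => hlt j)

theorem add_smul_mem_dominanceCell (hn : ∀ i, ‖n i‖ = 1) {i : ι} {x : E}
    (hx : x ∈ dominanceCell p n i) {t : ℝ} (ht : 0 ≤ t) : x + t • n i ∈ dominanceCell p n i := by
  have hcs (j : ι) : t * ⟪n i, n j⟫ ≤ t * ⟪n i, n i⟫ := by
    refine mul_le_mul_of_nonneg_left ?_ ht
    simpa [hn] using real_inner_le_norm (n i) (n j)
  have hshift (j : ι) : ⟪x + t • n i - p, n j⟫ = ⟪x - p, n j⟫ + t * ⟪n i, n j⟫ := by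
    rw [add_sub_right_comm, inner_add_left, real_inner_smul_left]
  constructor
  · intro j
    rw [hshift, hshift]
    exact add_le_add (hx.1 j) (hcs j)
  · intro j hj
    rw [hshift, hshift]
    exact add_lt_add_of_lt_of_le (hx.2 j hj) (hcs j)

theorem integral_eq_sum_dominanceCell [Fintype ι] [Nonempty ι] [MeasurableSpace E]
    [OpensMeasurableSpace E] {μ : Measure E} {F : E → ℝ} (hF : Integrable F μ) :
    ∫ x, F x ∂μ = ∑ i, ∫ x in dominanceCell p n i, F x ∂μ := by
  rw [← setIntegral_univ, ← iUnion_dominanceCell (p := p) (n := n),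
    integral_iUnion_fintype measurableSet_dominanceCell pairwise_disjoint_dominanceCell
      fun i => hF.integrableOn]

end DominanceCell

theorem sq_mul_integral_sq_le_of_isBalanced {ι : Type*} [Fintype ι] [LinearOrder ι]
    {w : ι → ℝ} {n : ι → E2} (hbal : IsBalanced w n) {u : E2 → ℝ} (hu : ContDiff ℝ 1 u)
    (hcs : HasCompactSupport u) {p : E2} {r k : ℝ} (hu0 : ∀ i x, r ≤ ⟪x - p, n i⟫ → u x = 0)
    (hk : 0 < k) (hkr : k * r < π / 2) :
    k ^ 2 * ∫ x, u x ^ 2 ≤ ∫ x, ‖fderiv ℝ u x‖ ^ 2 := by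
  have : Nonempty ι := by
    by_contra h
    rw [not_nonempty_iff] at h
    simpa using hbal.sum_weight
  rw [integral_eq_sum_dominanceCell (p := p) (n := n)
      (integrable_sq_of_hasCompactSupport hu.continuous hcs),
    integral_eq_sum_dominanceCell (p := p) (n := n)
      (integrable_norm_fderiv_sq_of_hasCompactSupport hu hcs), Finset.mul_sum]
  refine Finset.sum_le_sum fun i _ => ?_
  obtain ⟨b, hb⟩ := exists_orthonormalBasis_one_eq (hbal.norm_eq_one i)
  refine sq_mul_setIntegral_sq_le_of_forall_add_smul_mem (p := p) (b := b) hu hcs ?_ hk hkr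
    (measurableSet_dominanceCell i) ?_ ?_ <;> rw [hb]
  · exact hu0 i
  · exact fun x hx => hbal.inner_nonneg_of_forall_le hx.1
  · exact fun x hx t ht => add_smul_mem_dominanceCell hbal.norm_eq_one hx ht

end HerschProtter

section DirichletEigenvalue

variable {Ω : Set E2}

theorem dEig1_le_div {u : E2 → ℝ} (hu : ContDiff ℝ (⊤ : ℕ∞) u) (hcs : HasCompactSupport u)
    (hsupp : tsupport u ⊆ Ω) (hu0 : ∫ x, u x ^ 2 ≠ 0) :
    dEig1 Ω ≤ (∫ x, ‖fderiv ℝ u x‖ ^ 2) / ∫ x, u x ^ 2 := by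
  refine csInf_le ⟨0, ?_⟩ ⟨u, hu, hcs, hsupp, hu0, rfl⟩
  rintro R ⟨v, -, -, -, -, rfl⟩
  positivity

theorem exists_contDiff_integral_sq_ne_zero (hne : Ω.Nonempty) (hopen : IsOpen Ω) :
    ∃ u : E2 → ℝ, ContDiff ℝ (⊤ : ℕ∞) u ∧ HasCompactSupport u ∧ tsupport u ⊆ Ω ∧
      ∫ x, u x ^ 2 ≠ 0 := by
  obtain ⟨x, hx⟩ := hne
  obtain ⟨u, hsupp, hcs, hu, -, hux⟩ :=
    exists_contDiff_tsupport_subset (n := (⊤ : ℕ∞)) (hopen.mem_nhds hx)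
  have hcs2 : HasCompactSupport fun x => u x ^ 2 :=
    hcs.comp_left (g := fun t : ℝ => t ^ 2) (zero_pow two_ne_zero)
  exact ⟨u, hu, hcs, hsupp, ((hu.continuous.pow 2).integral_pos_of_hasCompactSupport_nonneg_nonzero
    hcs2 (fun x => sq_nonneg _) (x := x) (by simp [hux])).ne'⟩

theorem le_dEig1 (hne : Ω.Nonempty) (hopen : IsOpen Ω) {c : ℝ}
    (hc : ∀ u : E2 → ℝ, ContDiff ℝ (⊤ : ℕ∞) u → HasCompactSupport u → tsupport u ⊆ Ω →
      ∫ x, u x ^ 2 ≠ 0 → c ≤ (∫ x, ‖fderiv ℝ u x‖ ^ 2) / ∫ x, u x ^ 2) :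
    c ≤ dEig1 Ω := by
  obtain ⟨u, hu, hcs, hsupp, hu0⟩ := exists_contDiff_integral_sq_ne_zero hne hopen
  refine le_csInf ⟨_, u, hu, hcs, hsupp, hu0, rfl⟩ ?_
  rintro R ⟨v, hv, hvcs, hvsupp, hv0, rfl⟩
  exact hc v hv hvcs hvsupp hv0

theorem pi_sq_div_le_dEig1 (hne : Ω.Nonempty) (hopen : IsOpen Ω) {ι : Type*} [Fintype ι]
    [LinearOrder ι] {w : ι → ℝ} {n : ι → E2} (hbal : IsBalanced w n) {p : E2} {r : ℝ} (hr : 0 < r)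
    (hΩ : ∀ i, ∀ x ∈ Ω, ⟪x - p, n i⟫ < r) : (π / (2 * r)) ^ 2 ≤ dEig1 Ω := by
  refine le_dEig1 hne hopen fun u hu hcs hsupp hu0 => ?_
  have hupos : 0 < ∫ x, u x ^ 2 := (integral_nonneg fun _ => sq_nonneg _).lt_of_ne' hu0
  have hvanish : ∀ i x, r ≤ ⟪x - p, n i⟫ → u x = 0 := fun i x hx => by
    by_contra h
    exact (hΩ i x (hsupp (subset_tsupport u h))).not_ge hx
  have hbelow : ∀ k, 0 < k → k < π / (2 * r) →
      k ^ 2 ≤ (∫ x, ‖fderiv ℝ u x‖ ^ 2) / ∫ x, u x ^ 2 := fun k hk hkr => by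
    rw [lt_div_iff₀ (by positivity)] at hkr
    exact (le_div_iff₀ hupos).2 (sq_mul_integral_sq_le_of_isBalanced hbal
      (hu.of_le (by exact_mod_cast le_top)) hcs hvanish hk (by linarith))
  refine le_of_tendsto (((continuous_pow 2).tendsto (π / (2 * r))).mono_left
    (nhdsWithin_le_nhds (s := Iio (π / (2 * r))))) ?_
  filter_upwards [Ioo_mem_nhdsLT (show 0 < π / (2 * r) by positivity)] with k hk
    using hbelow k hk.1 hk.2

section Rescaling

variable {p : E2} {r : ℝ}

theorem integral_comp_rescale (hr : 0 < r) (F : E2 → ℝ) :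
    ∫ x, F (r⁻¹ • (x - p)) = r ^ 2 * ∫ x, F x := by
  rw [integral_sub_right_eq_self (fun x => F (r⁻¹ • x)) p, Measure.integral_comp_inv_smul]
  simp [abs_of_pos (pow_pos hr 2)]

theorem fderiv_comp_rescale {u : E2 → ℝ} (hu : Differentiable ℝ u) (x : E2) :
    fderiv ℝ (fun x => u (r⁻¹ • (x - p))) x = r⁻¹ • fderiv ℝ u (r⁻¹ • (x - p)) := by
  have hrescale : HasFDerivAt (fun x : E2 => r⁻¹ • (x - p))
      (r⁻¹ • ContinuousLinearMap.id ℝ E2) x := ((hasFDerivAt_id x).sub_const p).const_smul r⁻¹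
  refine ((hu _).hasFDerivAt.comp x hrescale).fderiv.trans ?_
  ext y
  simp

theorem integral_norm_fderiv_sq_comp_rescale (hr : 0 < r) {u : E2 → ℝ} (hu : Differentiable ℝ u) :
    ∫ x, ‖fderiv ℝ (fun x => u (r⁻¹ • (x - p))) x‖ ^ 2 = ∫ x, ‖fderiv ℝ u x‖ ^ 2 := by
  simp only [fderiv_comp_rescale hu, norm_smul, mul_pow, norm_inv, Real.norm_eq_abs, inv_pow,
    sq_abs]
  rw [integral_comp_rescale hr fun y => (r ^ 2)⁻¹ * ‖fderiv ℝ u y‖ ^ 2, integral_const_mul,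
    mul_inv_cancel_left₀ (by positivity)]

theorem sq_mul_dEig1_le_dEig1_unitDisc (hr : 0 < r) (hball : Metric.ball p r ⊆ Ω) :
    r ^ 2 * dEig1 Ω ≤ dEig1 unitDisc := by
  refine le_dEig1 (Metric.nonempty_ball.2 one_pos) Metric.isOpen_ball fun u hu hcs hsupp hu0 => ?_
  let φ : E2 ≃ₜ E2 :=
    (Homeomorph.subRight p).trans (Homeomorph.smulOfNeZero r⁻¹ (inv_ne_zero hr.ne'))
  have hsq : ∫ x, u (r⁻¹ • (x - p)) ^ 2 = r ^ 2 * ∫ x, u x ^ 2 :=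
    integral_comp_rescale hr fun x => u x ^ 2
  have hsupp' : tsupport (u ∘ φ) ⊆ Ω := by
    rw [tsupport_comp_eq_preimage]
    intro x hx
    have hφx : ‖r⁻¹ • (x - p)‖ < 1 := mem_ball_zero_iff.1 (hsupp hx)
    rw [norm_smul, norm_inv, Real.norm_of_nonneg hr.le, inv_mul_lt_one₀ hr] at hφx
    exact hball (mem_ball_iff_norm.2 hφx)
  have hle := dEig1_le_div (u := fun x => u (r⁻¹ • (x - p))) (hu.comp (by fun_prop))
    (hcs.comp_homeomorph φ) hsupp' (by rw [hsq]; positivity)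
  rw [hsq, integral_norm_fderiv_sq_comp_rescale hr (hu.differentiable (by simp)), mul_comm (r ^ 2),
    ← div_div, le_div_iff₀' (by positivity)] at hle
  exact hle

end Rescaling

end DirichletEigenvalue

section WeightedPoincare

theorem deriv_le_of_riccati {k h f f' A A' φ : ℝ} (hk : 0 < k) (hh : 0 < h)
    (hriccati : A' + A ^ 2 * h + k ^ 2 / h ≤ 0) :
    A' * φ ^ 2 + A * (2 * φ * (f * h)) - (2 * f' * φ + 2 * f * (f * h)) ≤
      f' ^ 2 * h / k ^ 2 - f ^ 2 * h := by
  have hsquare : f' ^ 2 * h / k ^ 2 + 2 * f' * φ + φ ^ 2 * (k ^ 2 / h) =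
      (f' * h / k + k * φ) ^ 2 / h := by
    field_simp
    ring
  have hsquares : 0 ≤ (f' * h / k + k * φ) ^ 2 / h + h * (f - A * φ) ^ 2 := by positivity
  have hdefect := mul_nonpos_of_nonneg_of_nonpos (sq_nonneg φ) hriccati
  linarith

-- Integrate the derivative of `A φ² - 2 f φ`, where `φ` is the primitive of `f h`.
theorem sq_mul_integral_sq_mul_le_of_riccati {a b k : ℝ} (hab : a ≤ b) {h f f' A A' : ℝ → ℝ}
    (hh : ContinuousOn h (Icc a b)) (hpos : ∀ x ∈ Icc a b, 0 < h x)
    (hA : ∀ x ∈ Icc a b, HasDerivAt A (A' x) x)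
    (hriccati : ∀ x ∈ Icc a b, A' x + A x ^ 2 * h x + k ^ 2 / h x ≤ 0)
    (hf : ∀ x, HasDerivAt f (f' x) x) (hf' : Continuous f') (hk : 0 < k)
    (hmean : ∫ x in a..b, f x * h x = 0) :
    k ^ 2 * ∫ x in a..b, f x ^ 2 * h x ≤ ∫ x in a..b, f' x ^ 2 * h x := by
  have hfc : Continuous f := continuous_iff_continuousAt.2 fun y => (hf y).continuousAt
  have hAc : ContinuousOn A (Icc a b) := fun x hx => (hA x hx).continuousAt.continuousWithinAt
  have hfh : ContinuousOn (fun x => f x * h x) (Icc a b) := by fun_prop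
  set φ : ℝ → ℝ := fun x => ∫ y in a..x, f y * h y with hφ
  have hφc : ContinuousOn φ (Icc a b) := by
    rw [← uIcc_of_le hab] at hfh ⊢
    exact intervalIntegral.continuousOn_primitive_interval
      (hfh.integrableOn_compact isCompact_uIcc)
  have hφd : ∀ x ∈ Ioo a b, HasDerivAt φ (f x * h x) x := fun x hx =>
    intervalIntegral.integral_hasDerivAt_right
      ((hfh.mono (Icc_subset_Icc_right hx.2.le)).intervalIntegrable_of_Icc hx.1.le)
      ((hfh.mono Ioo_subset_Icc_self).stronglyMeasurableAtFilter isOpen_Ioo x hx)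
      (hfh.continuousAt (Icc_mem_nhds hx.1 hx.2))
  have hintg := intervalIntegral.sub_le_integral_of_hasDeriv_right_of_le hab
    (g := fun x => A x * φ x ^ 2 - 2 * f x * φ x) (by fun_prop)
    (fun x hx => (((hA x (Ioo_subset_Icc_self hx)).mul ((hφd x hx).pow 2)).sub
      (((hf x).const_mul 2).mul (hφd x hx))).congr_deriv (by simp) |>.hasDerivWithinAt)
    (by fun_prop : ContinuousOn (fun x => f' x ^ 2 * h x / k ^ 2 - f x ^ 2 * h x)
      (Icc a b)).integrableOn_Icc
    fun x hx => deriv_le_of_riccati (φ := φ x) hk (hpos x (Ioo_subset_Icc_self hx))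
      (hriccati x (Ioo_subset_Icc_self hx))
  rw [intervalIntegral.integral_sub
      ((by fun_prop : ContinuousOn _ (Icc a b)).intervalIntegrable_of_Icc hab)
      ((by fun_prop : ContinuousOn _ (Icc a b)).intervalIntegrable_of_Icc hab),
    intervalIntegral.integral_div, show φ a = 0 from intervalIntegral.integral_same,
    show φ b = 0 from hmean] at hintg
  rw [← le_div_iff₀' (by positivity)]
  linarith

theorem hasDerivAt_tan_mul_sub {k c x : ℝ} (hcos : cos (k * (x - c)) ≠ 0) :
    HasDerivAt (fun x => tan (k * (x - c))) ((1 + tan (k * (x - c)) ^ 2) * k) x := by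
  have hlin : HasDerivAt (fun x => k * (x - c)) k x := by
    simpa using ((hasDerivAt_id x).sub_const c).const_mul k
  refine ((Real.hasDerivAt_tan hcos).comp x hlin).congr_deriv ?_
  rw [one_div, ← inv_one_add_tan_sq hcos, inv_inv]

-- `A = φ' / (h φ)` for `φ x = √(h x) * cos (k * (x - c))`, with `c` the midpoint.
theorem exists_riccati_of_deriv2_nonpos {a b k : ℝ} {h h' h'' : ℝ → ℝ}
    (hh : ∀ x ∈ Icc a b, HasDerivAt h (h' x) x) (hh' : ∀ x ∈ Icc a b, HasDerivAt h' (h'' x) x)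
    (hpos : ∀ x ∈ Icc a b, 0 < h x) (hneg : ∀ x ∈ Icc a b, h'' x ≤ 0) (hk : 0 < k)
    (hkab : k * (b - a) < π) :
    ∃ A A' : ℝ → ℝ, (∀ x ∈ Icc a b, HasDerivAt A (A' x) x) ∧
      ∀ x ∈ Icc a b, A' x + A x ^ 2 * h x + k ^ 2 / h x ≤ 0 := by
  set c := (a + b) / 2 with hc
  have hcos : ∀ x ∈ Icc a b, cos (k * (x - c)) ≠ 0 := fun x hx =>
    (cos_pos_of_mem_Ioo ⟨by rw [hc]; nlinarith [hx.1], by rw [hc]; nlinarith [hx.2]⟩).ne'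
  have hderiv := fun x hx =>
    (((hasDerivAt_tan_mul_sub (hcos x hx)).const_mul (-k)).add ((hh' x hx).div
      ((hh x hx).const_mul 2) (mul_ne_zero two_ne_zero (hpos x hx).ne'))).div (hh x hx)
      (hpos x hx).ne'
  refine ⟨_, _, hderiv, fun x hx => ?_⟩
  have hhx := hpos x hx
  have hnonneg : 0 ≤ 3 * (h' x / (2 * h x)) ^ 2 + -h'' x / (2 * h x) := by
    have := div_nonneg (neg_nonneg.2 (hneg x hx)) (mul_nonneg two_pos.le hhx.le)
    positivity
  refine le_of_eq_of_le ?_ (neg_nonpos.2 (div_nonneg hnonneg hhx.le))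
  simp only [Pi.add_apply, Pi.div_apply]
  field_simp
  ring

theorem sq_mul_variance_le_of_deriv2_nonpos {a b k : ℝ} (hab : a < b) {h h' h'' f f' : ℝ → ℝ}
    (hh : ∀ x ∈ Icc a b, HasDerivAt h (h' x) x) (hh' : ∀ x ∈ Icc a b, HasDerivAt h' (h'' x) x)
    (hpos : ∀ x ∈ Icc a b, 0 < h x) (hneg : ∀ x ∈ Icc a b, h'' x ≤ 0)
    (hf : ∀ x, HasDerivAt f (f' x) x) (hf' : Continuous f') (hk : 0 < k)
    (hkab : k * (b - a) < π) :
    k ^ 2 * ((∫ x in a..b, f x ^ 2 * h x) * (∫ x in a..b, h x) - (∫ x in a..b, f x * h x) ^ 2) ≤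
      (∫ x in a..b, f' x ^ 2 * h x) * ∫ x in a..b, h x := by
  have hfc : Continuous f := continuous_iff_continuousAt.2 fun y => (hf y).continuousAt
  have hhc : ContinuousOn h (Icc a b) := fun x hx => (hh x hx).continuousAt.continuousWithinAt
  have hintg : ∀ φ : ℝ → ℝ, Continuous φ → IntervalIntegrable (fun x => φ x * h x) volume a b :=
    fun φ hφ => (hφ.continuousOn.mul hhc).intervalIntegrable_of_Icc hab.le
  have hint0 : IntervalIntegrable h volume a b := hhc.intervalIntegrable_of_Icc hab.le
  have hintg1 := hintg f hfc
  have hintg2 := hintg (fun x => f x ^ 2) (by fun_prop)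
  set H := ∫ x in a..b, h x
  set S := ∫ x in a..b, f x * h x
  set Q := ∫ x in a..b, f x ^ 2 * h x
  have hH : 0 < H := intervalIntegral.intervalIntegral_pos_of_pos_on hint0
    (fun x hx => hpos x (Ioo_subset_Icc_self hx)) hab
  have hmean : ∫ x in a..b, (f x - S / H) * h x = 0 := by
    simp only [sub_mul]
    rw [intervalIntegral.integral_sub hintg1 (hint0.const_mul _),
      intervalIntegral.integral_const_mul, div_mul_cancel₀ _ hH.ne', sub_self]
  have hvar : ∫ x in a..b, (f x - S / H) ^ 2 * h x = Q - 2 * (S / H) * S + (S / H) ^ 2 * H := by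
    rw [← intervalIntegral.integral_const_mul, ← intervalIntegral.integral_const_mul,
      ← intervalIntegral.integral_sub hintg2 (hintg1.const_mul _),
      ← intervalIntegral.integral_add (hintg2.sub (hintg1.const_mul _)) (hint0.const_mul _)]
    congr 1 with x
    ring
  obtain ⟨A, A', hA, hriccati⟩ := exists_riccati_of_deriv2_nonpos hh hh' hpos hneg hk hkab
  have hle := sq_mul_integral_sq_mul_le_of_riccati hab.le hhc hpos hA hriccati
    (f := fun x => f x - S / H) (fun x => (hf x).sub_const _) hf' hk hmean
  calc k ^ 2 * (Q * H - S ^ 2) = k ^ 2 * (Q - 2 * (S / H) * S + (S / H) ^ 2 * H) * H := by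
        field_simp
        ring
    _ ≤ (∫ x in a..b, f' x ^ 2 * h x) * H := by
        rw [← hvar]
        exact mul_le_mul_of_nonneg_right hle hH.le

/-- The second difference quotient of `F` with step `t`, taken forward from `x`. -/
def secondDiffQuotient (F : ℝ → ℝ) (t x : ℝ) : ℝ := (F (x + 2 * t) - 2 * F (x + t) + F x) / t ^ 2

theorem hasDerivAt_secondDiffQuotient {F F' : ℝ → ℝ} {t x : ℝ} (h0 : HasDerivAt F (F' x) x)
    (h1 : HasDerivAt F (F' (x + t)) (x + t)) (h2 : HasDerivAt F (F' (x + 2 * t)) (x + 2 * t)) :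
    HasDerivAt (secondDiffQuotient F t) (secondDiffQuotient F' t x) x :=
  (((h2.comp_add_const x (2 * t)).sub ((h1.comp_add_const x t).const_mul 2)).add h0).div_const _

theorem secondDiffQuotient_nonpos_of_concaveOn {F : ℝ → ℝ} {s : Set ℝ} (hF : ConcaveOn ℝ s F)
    {t x : ℝ} (hx : x ∈ s) (hxt : x + 2 * t ∈ s) : secondDiffQuotient F t x ≤ 0 := by
  have hmid := hF.2 hx hxt one_half_pos.le one_half_pos.le (add_halves 1)
  simp only [smul_eq_mul] at hmid
  rw [show (1 / 2 : ℝ) * x + 1 / 2 * (x + 2 * t) = x + t by ring] at hmid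
  exact div_nonpos_of_nonpos_of_nonneg (by linarith) (sq_nonneg t)

theorem exists_secondDiffQuotient_eq {F G h : ℝ → ℝ} {t x : ℝ} (ht : 0 < t)
    (hF : ∀ y ∈ Icc x (x + 2 * t), HasDerivAt F (G y) y)
    (hG : ∀ y ∈ Icc x (x + 2 * t), HasDerivAt G (h y) y) :
    ∃ d ∈ Ioo x (x + 2 * t), secondDiffQuotient F t x = h d := by
  have hdiff : ∀ y ∈ Icc x (x + t),
      HasDerivAt (fun y => F (y + t) - F y) (G (y + t) - G y) y := fun y hy =>
    ((hF (y + t) ⟨by linarith [hy.1], by linarith [hy.2]⟩).comp_add_const y t).sub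
      (hF y ⟨hy.1, by linarith [hy.2]⟩)
  obtain ⟨c, hc, hcslope⟩ := exists_hasDerivAt_eq_slope _ _ (show x < x + t by linarith)
    (fun y hy => (hdiff y hy).continuousAt.continuousWithinAt)
    fun y hy => hdiff y (Ioo_subset_Icc_self hy)
  have hG' : ∀ y ∈ Icc c (c + t), HasDerivAt G (h y) y := fun y hy =>
    hG y ⟨by linarith [hc.1, hy.1], by linarith [hc.2, hy.2]⟩
  obtain ⟨d, hd, hdslope⟩ := exists_hasDerivAt_eq_slope G h (show c < c + t by linarith)
    (fun y hy => (hG' y hy).continuousAt.continuousWithinAt)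
    fun y hy => hG' y (Ioo_subset_Icc_self hy)
  refine ⟨d, ⟨by linarith [hc.1, hd.1], by linarith [hc.2, hd.2]⟩, ?_⟩
  rw [hdslope, hcslope, secondDiffQuotient, show x + t + t = x + 2 * t by ring, add_sub_cancel_left,
    add_sub_cancel_left]
  field_simp
  ring

/-- The average of `h (x + t * (σ + τ))` over `σ, τ ∈ [0, 1]`, written as a second difference
quotient of an iterated primitive: a twice differentiable, concavity-preserving approximation of
`h`. -/
def doubleAverage (h : ℝ → ℝ) (t : ℝ) : ℝ → ℝ :=
  secondDiffQuotient (fun x => ∫ s in (0 : ℝ)..x, ∫ r in (0 : ℝ)..s, h r) t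

section DoubleAverage

variable {h : ℝ → ℝ} {a b t : ℝ}

theorem hasDerivAt_primitive_primitive (hi : Integrable h) (x : ℝ) :
    HasDerivAt (fun x => ∫ s in (0 : ℝ)..x, ∫ r in (0 : ℝ)..s, h r) (∫ r in (0 : ℝ)..x, h r) x := by
  have hc : Continuous fun x => ∫ r in (0 : ℝ)..x, h r :=
    intervalIntegral.continuous_primitive (fun _ _ => hi.intervalIntegrable) 0
  exact intervalIntegral.integral_hasDerivAt_right (hc.intervalIntegrable _ _)
    (hc.stronglyMeasurableAtFilter _ _) hc.continuousAt

theorem hasDerivAt_primitive_of_continuousOn_Ioo (hi : Integrable h) (hc : ContinuousOn h (Ioo a b))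
    {x : ℝ} (hx : x ∈ Ioo a b) : HasDerivAt (fun x => ∫ r in (0 : ℝ)..x, h r) (h x) x :=
  intervalIntegral.integral_hasDerivAt_right hi.intervalIntegrable
    (hc.stronglyMeasurableAtFilter isOpen_Ioo x hx) (hc.continuousAt (isOpen_Ioo.mem_nhds hx))

theorem hasDerivAt_doubleAverage (hi : Integrable h) (x : ℝ) : HasDerivAt (doubleAverage h t)
    (secondDiffQuotient (fun x => ∫ r in (0 : ℝ)..x, h r) t x) x :=
  hasDerivAt_secondDiffQuotient (hasDerivAt_primitive_primitive hi _)
    (hasDerivAt_primitive_primitive hi _) (hasDerivAt_primitive_primitive hi _)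

theorem continuous_doubleAverage (hi : Integrable h) : Continuous (doubleAverage h t) :=
  continuous_iff_continuousAt.2 fun x => (hasDerivAt_doubleAverage hi x).continuousAt

theorem exists_doubleAverage_eq (hi : Integrable h) (hc : ContinuousOn h (Ioo a b)) (ht : 0 < t)
    {x : ℝ} (hax : a < x) (hxb : x + 2 * t < b) :
    ∃ d ∈ Ioo x (x + 2 * t), doubleAverage h t x = h d :=
  exists_secondDiffQuotient_eq ht (fun y _ => hasDerivAt_primitive_primitive hi y) fun _ hy =>
    hasDerivAt_primitive_of_continuousOn_Ioo hi hc ⟨hax.trans_le hy.1, hy.2.trans_lt hxb⟩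

theorem sq_mul_variance_doubleAverage_le {k : ℝ} {f f' : ℝ → ℝ} (ht : 0 < t)
    (htab : a + t < b - 3 * t) (hi : Integrable h) (hconc : ConcaveOn ℝ (Ioo a b) h)
    (hpos : ∀ x ∈ Ioo a b, 0 < h x) (hf : ∀ x, HasDerivAt f (f' x) x) (hf' : Continuous f')
    (hk : 0 < k) (hkab : k * (b - a) ≤ π) :
    k ^ 2 * ((∫ x in (a + t)..(b - 3 * t), f x ^ 2 * doubleAverage h t x) *
        (∫ x in (a + t)..(b - 3 * t), doubleAverage h t x) -
        (∫ x in (a + t)..(b - 3 * t), f x * doubleAverage h t x) ^ 2) ≤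
      (∫ x in (a + t)..(b - 3 * t), f' x ^ 2 * doubleAverage h t x) *
        ∫ x in (a + t)..(b - 3 * t), doubleAverage h t x := by
  have hc : ContinuousOn h (Ioo a b) := hconc.continuousOn isOpen_Ioo
  have hderiv : ∀ x ∈ Ioo a b, HasDerivAt (fun x => ∫ r in (0 : ℝ)..x, h r) (h x) x :=
    fun x hx => hasDerivAt_primitive_of_continuousOn_Ioo hi hc hx
  have hmem : ∀ x ∈ Icc (a + t) (b - 3 * t),
      x ∈ Ioo a b ∧ x + t ∈ Ioo a b ∧ x + 2 * t ∈ Ioo a b := by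
    rintro x ⟨hax, hxb⟩
    refine ⟨⟨?_, ?_⟩, ⟨?_, ?_⟩, ⟨?_, ?_⟩⟩ <;> linarith
  refine sq_mul_variance_le_of_deriv2_nonpos htab
    (h'' := secondDiffQuotient h t) (fun x _ => hasDerivAt_doubleAverage hi x) (fun x hx => ?_)
    (fun x hx => ?_) (fun x hx => ?_) hf hf' hk ?_
  · obtain ⟨h0, h1, h2⟩ := hmem x hx
    exact hasDerivAt_secondDiffQuotient (hderiv x h0) (hderiv _ h1) (hderiv _ h2)
  · obtain ⟨⟨hax, -⟩, -, -, hxb⟩ := hmem x hx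
    obtain ⟨d, hd, hgd⟩ := exists_doubleAverage_eq hi hc ht hax hxb
    exact hgd ▸ hpos d ⟨hax.trans hd.1, hd.2.trans hxb⟩
  · exact secondDiffQuotient_nonpos_of_concaveOn hconc (hmem x hx).1 (hmem x hx).2.2
  · exact (mul_lt_mul_of_pos_left (by linarith) hk).trans_le hkab

theorem tendsto_doubleAverage (hi : Integrable h) (hc : ContinuousOn h (Ioo a b)) {x : ℝ}
    (hx : x ∈ Ioo a b) :
    Tendsto (fun t => doubleAverage h t x) (nhdsWithin 0 (Ioi 0)) (nhds (h x)) := by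
  rw [Metric.tendsto_nhds]
  intro ε hε
  obtain ⟨δ, hδ, hclose⟩ :=
    Metric.continuousAt_iff.1 (hc.continuousAt (isOpen_Ioo.mem_nhds hx)) ε hε
  have hpos : 0 < min (δ / 2) ((b - x) / 2) := lt_min (half_pos hδ) (half_pos (sub_pos.2 hx.2))
  filter_upwards [Ioo_mem_nhdsGT hpos] with t ht
  obtain ⟨htδ, htb⟩ := lt_min_iff.1 ht.2
  obtain ⟨d, hd, hgd⟩ := exists_doubleAverage_eq hi hc ht.1 hx.1 (by linarith)
  rw [hgd]
  refine hclose ?_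
  rw [Real.dist_eq, abs_of_pos (by linarith [hd.1])]
  linarith [hd.2]

theorem tendsto_integral_mul_doubleAverage {M : ℝ} (hab : a < b) (hi : Integrable h)
    (hc : ContinuousOn h (Ioo a b)) (hM : ∀ x ∈ Ioo a b, |h x| ≤ M)
    (hzero : ∀ x ∉ Ioo a b, h x = 0) {φ : ℝ → ℝ} (hφ : Continuous φ) :
    Tendsto (fun t => ∫ x in (a + t)..(b - 3 * t), φ x * doubleAverage h t x)
      (nhdsWithin 0 (Ioi 0)) (nhds (∫ x, φ x * h x)) := by
  obtain ⟨C, hC⟩ := (isCompact_Icc (a := a) (b := b)).exists_bound_of_continuousOn hφ.continuousOn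
  have hlimit : ∫ x, φ x * h x = ∫ x in Ioo a b, φ x * h x :=
    (setIntegral_eq_integral_of_forall_compl_eq_zero fun x hx => by
      rw [hzero x hx, mul_zero]).symm
  have hinterval : ∀ᶠ t in nhdsWithin 0 (Ioi 0),
      ∫ x in Ioo a b, (Ioc (a + t) (b - 3 * t)).indicator (fun x => φ x * doubleAverage h t x) x =
        ∫ x in (a + t)..(b - 3 * t), φ x * doubleAverage h t x := by
    filter_upwards [Ioo_mem_nhdsGT (show 0 < (b - a) / 4 by linarith)] with t ⟨ht0, ht⟩
    rw [setIntegral_indicator measurableSet_Ioc, intervalIntegral.integral_of_le (by linarith),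
      inter_eq_right.2 (Ioc_subset_Ioo (by linarith) (by linarith))]
  rw [hlimit]
  refine (tendsto_integral_filter_of_dominated_convergence (fun _ => C * M) ?_ ?_
    (integrable_const _) ?_).congr' hinterval
  · exact .of_forall fun t => ((hφ.mul (continuous_doubleAverage hi)).measurable.indicator
      measurableSet_Ioc).aestronglyMeasurable
  · filter_upwards [self_mem_nhdsWithin] with t ht
    filter_upwards [ae_restrict_mem measurableSet_Ioo] with x hx
    have hCx : ‖φ x‖ ≤ C := hC x (Ioo_subset_Icc_self hx)
    have hM0 : 0 ≤ M := (abs_nonneg _).trans (hM x hx)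
    by_cases hxt : x ∈ Ioc (a + t) (b - 3 * t)
    · obtain ⟨d, hd, hgd⟩ := exists_doubleAverage_eq hi hc ht hx.1
        (show x + 2 * t < b by linarith [hxt.2, mem_Ioi.1 ht])
      rw [indicator_of_mem hxt, hgd, norm_mul]
      exact mul_le_mul hCx (hM d ⟨hx.1.trans hd.1, by linarith [hd.2, hxt.2, mem_Ioi.1 ht]⟩)
        (norm_nonneg _) ((norm_nonneg _).trans hCx)
    · rw [indicator_of_notMem hxt, norm_zero]
      exact mul_nonneg ((norm_nonneg _).trans hCx) hM0
  · filter_upwards [ae_restrict_mem measurableSet_Ioo] with x hx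
    refine ((tendsto_doubleAverage hi hc hx).const_mul (φ x)).congr' ?_
    have hpos : 0 < min (x - a) ((b - x) / 3) := lt_min (by linarith [hx.1]) (by linarith [hx.2])
    filter_upwards [Ioo_mem_nhdsGT hpos] with t ht
    obtain ⟨hta, htb⟩ := lt_min_iff.1 ht.2
    rw [indicator_of_mem (show x ∈ Ioc (a + t) (b - 3 * t) from ⟨by linarith, by linarith⟩)]

end DoubleAverage

theorem sq_mul_variance_le_of_concaveOn {a b L M : ℝ} {h f f' : ℝ → ℝ} (hab : a < b)
    (hL : b - a ≤ L) (hconc : ConcaveOn ℝ (Ioo a b) h) (hpos : ∀ x ∈ Ioo a b, 0 < h x)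
    (hzero : ∀ x ∉ Ioo a b, h x = 0) (hM : ∀ x, h x ≤ M) (hf : ∀ x, HasDerivAt f (f' x) x)
    (hf' : Continuous f') :
    (π / L) ^ 2 * ((∫ x, f x ^ 2 * h x) * (∫ x, h x) - (∫ x, f x * h x) ^ 2) ≤
      (∫ x, f' x ^ 2 * h x) * ∫ x, h x := by
  have hL0 : 0 < L := by linarith
  have hc : ContinuousOn h (Ioo a b) := hconc.continuousOn isOpen_Ioo
  have hfc : Continuous f := continuous_iff_continuousAt.2 fun x => (hf x).continuousAt
  have habs : ∀ x ∈ Ioo a b, |h x| ≤ M := fun x hx => (abs_of_pos (hpos x hx)).trans_le (hM x)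
  have hi : Integrable h := by
    refine (integrableOn_iff_integrable_of_support_subset (s := Ioo a b) fun x hx => ?_).1 ?_
    · exact not_imp_comm.1 (hzero x) hx
    · exact IntegrableOn.of_bound (by simp) (hc.aestronglyMeasurable measurableSet_Ioo) M
        ((ae_restrict_iff' measurableSet_Ioo).2 (.of_forall habs))
  have hlim {φ : ℝ → ℝ} (hφ : Continuous φ) :=
    tendsto_integral_mul_doubleAverage hab hi hc habs hzero hφ
  have hmass := hlim (φ := fun _ => 1) continuous_const
  simp only [one_mul] at hmass
  refine le_of_tendsto_of_tendsto
    ((((hlim (by fun_prop)).mul hmass).sub ((hlim hfc).pow 2)).const_mul _)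
    ((hlim (by fun_prop)).mul hmass) ?_
  filter_upwards [Ioo_mem_nhdsGT (show 0 < (b - a) / 4 by linarith)] with t ⟨ht0, ht⟩
  refine sq_mul_variance_doubleAverage_le ht0 (by linarith) hi hconc hpos hf hf'
    (div_pos pi_pos hL0) ?_
  rw [div_mul_eq_mul_div, div_le_iff₀ hL0]
  exact mul_le_mul_of_nonneg_left hL pi_pos.le

end WeightedPoincare

section ConvexSlices

theorem exists_eq_Ioo_of_isOpen_of_convex {S : Set ℝ} (hopen : IsOpen S) (hconv : Convex ℝ S)
    (hbd : Bornology.IsBounded S) (hne : S.Nonempty) : ∃ c d, c < d ∧ S = Ioo c d := by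
  have hsub : S ⊆ Icc (sInf S) (sSup S) := fun x hx =>
    ⟨csInf_le hbd.bddBelow hx, le_csSup hbd.bddAbove hx⟩
  have hS : S = Ioo (sInf S) (sSup S) := Subset.antisymm
    (by simpa using interior_maximal hsub hopen)
    (IsConnected.Ioo_csInf_csSup_subset ⟨hne, hconv.isPreconnected⟩ hbd.bddBelow hbd.bddAbove)
  exact ⟨_, _, nonempty_Ioo.1 (hS ▸ hne), hS⟩

theorem integrableOn_of_continuous_of_isBounded {X : Type*} [MetricSpace X] [ProperSpace X]
    [MeasureSpace X] [OpensMeasurableSpace X] [IsFiniteMeasureOnCompacts (volume : Measure X)]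
    {K : Set X} {F : X → ℝ} (hF : Continuous F) (hbd : Bornology.IsBounded K) :
    IntegrableOn F K :=
  (hF.continuousOn.integrableOn_compact hbd.isCompact_closure).mono_set subset_closure

/-- The set of first coordinates, in the frame `(p, b)`, of the points of `K`. -/
def frameShadow (K : Set E2) (p : E2) (b : OrthonormalBasis (Fin 2) ℝ E2) : Set ℝ :=
  {s | (frameSlice K p b s).Nonempty}

/-- The length of the slice of `K` at first coordinate `s` in the frame `(p, b)`. -/
def sliceLength (K : Set E2) (p : E2) (b : OrthonormalBasis (Fin 2) ℝ E2) (s : ℝ) : ℝ :=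
  volume.real (frameSlice K p b s)

variable {K : Set E2} (p : E2) (b : OrthonormalBasis (Fin 2) ℝ E2)

theorem isOpen_frameSlice (hopen : IsOpen K) (s : ℝ) : IsOpen (frameSlice K p b s) :=
  hopen.preimage (by fun_prop : Continuous fun y => framePoint p b (s, y))

theorem isOpen_frameShadow (hopen : IsOpen K) : IsOpen (frameShadow K p b) := by
  have hunion : frameShadow K p b = ⋃ y, (fun s => framePoint p b (s, y)) ⁻¹' K := by
    ext s
    simp [frameShadow, frameSlice, Set.Nonempty]
  rw [hunion]
  exact isOpen_iUnion fun y => hopen.preimage (by fun_prop)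

theorem add_mem_frameSlice (hconv : Convex ℝ K) {s s' y y' α β : ℝ}
    (hy : y ∈ frameSlice K p b s) (hy' : y' ∈ frameSlice K p b s') (hα : 0 ≤ α) (hβ : 0 ≤ β)
    (hαβ : α + β = 1) : α * y + β * y' ∈ frameSlice K p b (α * s + β * s') := by
  have hmem := hconv hy hy' hα hβ hαβ
  rwa [← framePoint_smul_add_smul p b hαβ] at hmem

theorem convex_frameSlice (hconv : Convex ℝ K) (s : ℝ) : Convex ℝ (frameSlice K p b s) := by
  intro y hy y' hy' α β hα hβ hαβ
  simpa [← add_mul, hαβ] using add_mem_frameSlice p b hconv hy hy' hα hβ hαβ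

theorem convex_frameShadow (hconv : Convex ℝ K) : Convex ℝ (frameShadow K p b) := by
  rintro s ⟨y, hy⟩ s' ⟨y', hy'⟩ α β hα hβ hαβ
  exact ⟨_, add_mem_frameSlice p b hconv hy hy' hα hβ hαβ⟩

theorem frameShadow_nonempty (hne : K.Nonempty) : (frameShadow K p b).Nonempty := by
  obtain ⟨x, hx⟩ := hne
  exact ⟨⟪x - p, b 0⟫, ⟪x - p, b 1⟫, by rwa [frameSlice, mem_ofPred_eq, framePoint_inner_sub]⟩

theorem abs_inner_basis_le_norm (x : E2) (i : Fin 2) : |⟪x, b i⟫| ≤ ‖x‖ := by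
  simpa [b.norm_eq_one i] using abs_real_inner_le_norm x (b i)

theorem frameSlice_subset_Icc {R : ℝ} (hR : K ⊆ Metric.closedBall p R) (s : ℝ) :
    frameSlice K p b s ⊆ Icc (-R) R := by
  intro y hy
  have hle := (abs_inner_basis_le_norm b _ 1).trans (mem_closedBall_iff_norm.1 (hR hy))
  rwa [inner_framePoint_sub_one, abs_le] at hle

theorem frameShadow_subset_Icc {R : ℝ} (hR : K ⊆ Metric.closedBall p R) :
    frameShadow K p b ⊆ Icc (-R) R := by
  rintro s ⟨y, hy⟩
  have hle := (abs_inner_basis_le_norm b _ 0).trans (mem_closedBall_iff_norm.1 (hR hy))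
  rwa [inner_framePoint_sub_zero, abs_le] at hle

theorem isBounded_frameSlice (hbd : Bornology.IsBounded K) (s : ℝ) :
    Bornology.IsBounded (frameSlice K p b s) := by
  obtain ⟨R, hR⟩ := hbd.subset_closedBall p
  exact (Metric.isBounded_Icc _ _).subset (frameSlice_subset_Icc p b hR s)

theorem isBounded_frameShadow (hbd : Bornology.IsBounded K) :
    Bornology.IsBounded (frameShadow K p b) := by
  obtain ⟨R, hR⟩ := hbd.subset_closedBall p
  exact (Metric.isBounded_Icc _ _).subset (frameShadow_subset_Icc p b hR)

theorem exists_frameSlice_eq_Ioo (hopen : IsOpen K) (hconv : Convex ℝ K)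
    (hbd : Bornology.IsBounded K) {s : ℝ} (hs : s ∈ frameShadow K p b) :
    ∃ c d, c < d ∧ frameSlice K p b s = Ioo c d :=
  exists_eq_Ioo_of_isOpen_of_convex (isOpen_frameSlice p b hopen s) (convex_frameSlice p b hconv s)
    (isBounded_frameSlice p b hbd s) hs

theorem exists_frameShadow_eq_Ioo (hne : K.Nonempty) (hopen : IsOpen K) (hconv : Convex ℝ K)
    (hbd : Bornology.IsBounded K) : ∃ c d, c < d ∧ frameShadow K p b = Ioo c d :=
  exists_eq_Ioo_of_isOpen_of_convex (isOpen_frameShadow p b hopen) (convex_frameShadow p b hconv)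
    (isBounded_frameShadow p b hbd) (frameShadow_nonempty p b hne)

theorem dist_le_of_mem_frameShadow {L : ℝ} (hL : ∀ x ∈ K, ∀ y ∈ K, dist x y ≤ L) :
    ∀ s ∈ frameShadow K p b, ∀ s' ∈ frameShadow K p b, dist s s' ≤ L := by
  rintro s ⟨y, hy⟩ s' ⟨y', hy'⟩
  have hle := abs_inner_basis_le_norm b (framePoint p b (s, y) - framePoint p b (s', y')) 0
  rw [← sub_sub_sub_cancel_right _ _ p, inner_sub_left, inner_framePoint_sub_zero,
    inner_framePoint_sub_zero, sub_sub_sub_cancel_right, ← dist_eq_norm] at hle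
  exact hle.trans (hL _ hy _ hy')

theorem sliceLength_eq_zero {s : ℝ} (hs : s ∉ frameShadow K p b) : sliceLength K p b s = 0 := by
  rw [sliceLength, not_nonempty_iff_eq_empty.1 hs, measureReal_empty]

theorem sliceLength_eq_sub {s c d : ℝ} (hcd : c ≤ d) (h : frameSlice K p b s = Ioo c d) :
    sliceLength K p b s = d - c := by
  rw [sliceLength, h, Real.volume_real_Ioo_of_le hcd]

theorem sliceLength_pos (hopen : IsOpen K) (hconv : Convex ℝ K) (hbd : Bornology.IsBounded K)
    {s : ℝ} (hs : s ∈ frameShadow K p b) : 0 < sliceLength K p b s := by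
  obtain ⟨c, d, hcd, h⟩ := exists_frameSlice_eq_Ioo p b hopen hconv hbd hs
  rw [sliceLength_eq_sub p b hcd.le h]
  exact sub_pos.2 hcd

variable {p b} in
theorem sliceLength_le_sub {s c d : ℝ} (hcd : c ≤ d) (h : frameSlice K p b s ⊆ Icc c d) :
    sliceLength K p b s ≤ d - c := by
  rw [← Real.volume_real_Icc_of_le hcd]
  exact measureReal_mono h measure_Icc_lt_top.ne

theorem sub_le_sliceLength (hbd : Bornology.IsBounded K) {s c d : ℝ}
    (h : Ioo c d ⊆ frameSlice K p b s) : d - c ≤ sliceLength K p b s := by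
  refine le_trans ?_ (measureReal_mono h (isBounded_frameSlice p b hbd s).measure_lt_top.ne)
  rw [Real.volume_real_Ioo]
  exact le_max_left _ _

theorem exists_mem_Ioo_mul_add_mul_eq {c d c' d' α β y : ℝ} (hcd : c < d) (hcd' : c' < d')
    (hy : y ∈ Ioo (α * c + β * c') (α * d + β * d')) :
    ∃ z ∈ Ioo c d, ∃ z' ∈ Ioo c' d', α * z + β * z' = y := by
  have hcont : ContinuousOn
      (fun t : ℝ => α * (c + t * (d - c)) + β * (c' + t * (d' - c'))) (Icc 0 1) := by fun_prop
  obtain ⟨t, ⟨ht0, ht1⟩, ht⟩ := intermediate_value_Ioo zero_le_one hcont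
    (by simpa using hy)
  exact ⟨c + t * (d - c), ⟨by nlinarith, by nlinarith⟩, c' + t * (d' - c'),
    ⟨by nlinarith, by nlinarith⟩, ht⟩

theorem concaveOn_sliceLength (hopen : IsOpen K) (hconv : Convex ℝ K)
    (hbd : Bornology.IsBounded K) : ConcaveOn ℝ (frameShadow K p b) (sliceLength K p b) := by
  refine ⟨convex_frameShadow p b hconv, fun s hs s' hs' α β hα hβ hαβ => ?_⟩
  obtain ⟨c, d, hcd, h⟩ := exists_frameSlice_eq_Ioo p b hopen hconv hbd hs
  obtain ⟨c', d', hcd', h'⟩ := exists_frameSlice_eq_Ioo p b hopen hconv hbd hs'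
  have hsub : Ioo (α * c + β * c') (α * d + β * d') ⊆ frameSlice K p b (α * s + β * s') := by
    intro y hy
    obtain ⟨z, hz, z', hz', rfl⟩ := exists_mem_Ioo_mul_add_mul_eq hcd hcd' hy
    exact add_mem_frameSlice p b hconv (h ▸ hz) (h' ▸ hz') hα hβ hαβ
  rw [sliceLength_eq_sub p b hcd.le h, sliceLength_eq_sub p b hcd'.le h']
  refine le_trans (le_of_eq ?_) (sub_le_sliceLength p b hbd hsub)
  simp only [smul_eq_mul]
  ring

section Integrals

variable {G : ℝ → ℝ}

variable (K G) in
theorem setIntegral_frameSlice_comp_inner (s : ℝ) :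
    ∫ y in frameSlice K p b s, G ⟪framePoint p b (s, y) - p, b 0⟫ = G s * sliceLength K p b s := by
  simp only [inner_framePoint_sub_zero]
  rw [setIntegral_const, smul_eq_mul, mul_comm, sliceLength]

theorem setIntegral_comp_inner_eq_integral_mul_sliceLength (hopen : IsOpen K)
    (hbd : Bornology.IsBounded K) (hG : Continuous G) :
    ∫ x in K, G ⟪x - p, b 0⟫ = ∫ s, G s * sliceLength K p b s := by
  rw [setIntegral_eq_integral_setIntegral_frameSlice p b hopen.measurableSet
    (integrableOn_of_continuous_of_isBounded (by fun_prop) hbd)]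
  simp only [setIntegral_frameSlice_comp_inner K p b G]

theorem integrable_sliceLength (hopen : IsOpen K) (hbd : Bornology.IsBounded K) :
    Integrable (sliceLength K p b) := by
  have hintg := integrable_setIntegral_frameSlice p b hopen.measurableSet
    (integrableOn_of_continuous_of_isBounded (continuous_const (y := (1 : ℝ))) hbd)
  simp only [setIntegral_const, smul_eq_mul, mul_one] at hintg
  exact hintg

theorem volume_real_eq_integral_sliceLength (hopen : IsOpen K) (hbd : Bornology.IsBounded K) :
    volume.real K = ∫ s, sliceLength K p b s := by
  simpa using setIntegral_comp_inner_eq_integral_mul_sliceLength p b hopen hbd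
    (continuous_const (y := (1 : ℝ)))

theorem sq_mul_variance_comp_inner_le (hne : K.Nonempty) (hopen : IsOpen K) (hconv : Convex ℝ K)
    (hbd : Bornology.IsBounded K) {L : ℝ} (hL : ∀ x ∈ K, ∀ y ∈ K, dist x y ≤ L) {f f' : ℝ → ℝ}
    (hf : ∀ x, HasDerivAt f (f' x) x) (hf' : Continuous f') :
    (π / L) ^ 2 * ((∫ x in K, f ⟪x - p, b 0⟫ ^ 2) * volume.real K -
        (∫ x in K, f ⟪x - p, b 0⟫) ^ 2) ≤
      (∫ x in K, f' ⟪x - p, b 0⟫ ^ 2) * volume.real K := by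
  obtain ⟨R, hR0, hR⟩ := hbd.subset_closedBall_lt 0 p
  obtain ⟨c, d, hcd, hshadow⟩ := exists_frameShadow_eq_Ioo p b hne hopen hconv hbd
  have hfc : Continuous f := continuous_iff_continuousAt.2 fun x => (hf x).continuousAt
  have hL0 : 0 ≤ L := by
    obtain ⟨x, hx⟩ := hne
    simpa using hL x hx x hx
  have hwidth : d - c ≤ L := by
    rw [← Real.diam_Ioo hcd.le, ← hshadow]
    exact Metric.diam_le_of_forall_dist_le hL0 (dist_le_of_mem_frameShadow p b hL)
  rw [volume_real_eq_integral_sliceLength p b hopen hbd,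
    setIntegral_comp_inner_eq_integral_mul_sliceLength p b hopen hbd
      (G := fun s => f s ^ 2) (by fun_prop),
    setIntegral_comp_inner_eq_integral_mul_sliceLength p b hopen hbd hfc,
    setIntegral_comp_inner_eq_integral_mul_sliceLength p b hopen hbd
      (G := fun s => f' s ^ 2) (by fun_prop)]
  exact sq_mul_variance_le_of_concaveOn hcd hwidth
    (hshadow ▸ concaveOn_sliceLength p b hopen hconv hbd)
    (fun x hx => sliceLength_pos p b hopen hconv hbd (hshadow ▸ hx))
    (fun x hx => sliceLength_eq_zero p b (hshadow ▸ hx))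
    (fun s => sliceLength_le_sub (by linarith) (frameSlice_subset_Icc p b hR s)) hf hf'

end Integrals

end ConvexSlices

section Bisection

variable {E : Type*} [NormedAddCommGroup E] [InnerProductSpace ℝ E]

/-- The open half-space through `q` with inner normal `e`. -/
def halfSpace (q e : E) : Set E := {x | 0 < ⟪x - q, e⟫}

theorem isOpen_halfSpace (q e : E) : IsOpen (halfSpace q e) :=
  isOpen_lt (by fun_prop) (by fun_prop)

theorem convex_halfSpace (q e : E) : Convex ℝ (halfSpace q e) := by
  have h := convex_halfSpace_gt (𝕜 := ℝ) (f := fun x : E => ⟪x, e⟫)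
    ⟨fun x y => inner_add_left x y e, fun c x => real_inner_smul_left x e c⟩ ⟪q, e⟫
  simpa only [halfSpace, inner_sub_left, sub_pos] using h

theorem disjoint_halfSpace_neg (q e : E) : Disjoint (halfSpace q e) (halfSpace q (-e)) := by
  refine Set.disjoint_left.2 fun x (hx : 0 < ⟪x - q, e⟫) (hx' : 0 < ⟪x - q, -e⟫) => ?_
  rw [inner_neg_right] at hx'
  linarith

theorem ball_subset_halfSpace {q e : E} (he : ‖e‖ = 1) (ε : ℝ) :
    Metric.ball (q + ε • e) ε ⊆ halfSpace q e := by
  intro x hx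
  have hdist : |⟪x - (q + ε • e), e⟫| < ε := by
    refine lt_of_le_of_lt ?_ (mem_ball_iff_norm.1 hx)
    simpa [he] using abs_real_inner_le_norm (x - (q + ε • e)) e
  have hinner : ⟪x - (q + ε • e), e⟫ = ⟪x - q, e⟫ - ε := by
    rw [← sub_sub, inner_sub_left, real_inner_smul_left, real_inner_self_eq_norm_sq, he]
    ring
  rw [halfSpace, mem_ofPred_eq]
  linarith [(abs_lt.1 hdist).1]

theorem ball_add_smul_subset_ball {q e : E} (he : ‖e‖ = 1) {ε : ℝ} (hε : 0 < ε) :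
    Metric.ball (q + ε • e) ε ⊆ Metric.ball q (2 * ε) := by
  refine Metric.ball_subset_ball' ?_
  simp only [dist_self_add_left, norm_smul, he, Real.norm_of_nonneg hε.le]
  linarith

theorem continuousAt_indicator_inter_halfSpace {K : Set E} {F : E → ℝ} {q e x : E}
    (hx : ⟪x - q, e⟫ ≠ 0) :
    ContinuousAt (fun e' => (K ∩ halfSpace q e').indicator F x) e := by
  have hcont : Continuous fun e' : E => ⟪x - q, e'⟫ := by fun_prop
  rcases hx.lt_or_gt with hneg | hpos
  · refine (continuousAt_const (y := (0 : ℝ))).congr ?_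
    filter_upwards [hcont.continuousAt.eventually_lt_const hneg] with e' he'
    exact (indicator_of_notMem (fun hmem => lt_asymm he' hmem.2) F).symm
  · refine (continuousAt_const (y := K.indicator F x)).congr ?_
    filter_upwards [hcont.continuousAt.eventually_const_lt hpos] with e' he'
    have hmem : x ∈ halfSpace q e' := he'
    classical simp [indicator_apply, hmem]

variable [FiniteDimensional ℝ E] [MeasurableSpace E] [BorelSpace E]

theorem ae_inner_sub_ne_zero (q : E) {e : E} (he : e ≠ 0) : ∀ᵐ x : E, ⟪x - q, e⟫ ≠ 0 := by
  let H : AffineSubspace ℝ E := AffineSubspace.mk' q (ℝ ∙ e)ᗮ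
  have hmem : ∀ x, x ∈ H ↔ ⟪x - q, e⟫ = 0 := fun x => by
    rw [AffineSubspace.mem_mk', vsub_eq_sub, Submodule.mem_orthogonal_singleton_iff_inner_left]
  have hH : H ≠ ⊤ := fun htop => he <| by
    simpa using (hmem (q + e)).1 (htop ▸ AffineSubspace.mem_top ℝ E _)
  rw [ae_iff, ← Measure.addHaar_affineSubspace volume H hH]
  congr 1
  ext x
  simpa using (hmem x).symm

variable {K : Set E} {F : E → ℝ}

theorem volume_real_pos_of_isOpen (hne : K.Nonempty) (hopen : IsOpen K)
    (hbd : Bornology.IsBounded K) : 0 < volume.real K :=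
  ENNReal.toReal_pos (hopen.measure_pos volume hne).ne' hbd.measure_lt_top.ne

theorem setIntegral_eq_add_halfSpace (hopen : IsOpen K) (hF : IntegrableOn F K) (q : E) {e : E}
    (he : e ≠ 0) :
    ∫ x in K, F x = (∫ x in K ∩ halfSpace q e, F x) + ∫ x in K ∩ halfSpace q (-e), F x := by
  rw [← setIntegral_union ((disjoint_halfSpace_neg q e).mono inter_subset_right inter_subset_right)
    (hopen.inter (isOpen_halfSpace q (-e))).measurableSet (hF.mono_set inter_subset_left)
    (hF.mono_set inter_subset_left), ← inter_union_distrib_left]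
  refine setIntegral_congr_set ?_
  filter_upwards [ae_inner_sub_ne_zero q he] with x hx
  refine propext ⟨fun hxK => ⟨hxK, ?_⟩, fun hxK => hxK.1⟩
  simpa [halfSpace, inner_neg_right] using hx.symm.lt_or_gt

theorem continuousAt_setIntegral_inter_halfSpace (hopen : IsOpen K) (hF : Continuous F)
    (hintg : IntegrableOn F K) (q : E) {e : E} (he : e ≠ 0) :
    ContinuousAt (fun e' => ∫ x in K ∩ halfSpace q e', F x) e := by
  have hmeas : ∀ e', MeasurableSet (K ∩ halfSpace q e') := fun e' =>
    (hopen.inter (isOpen_halfSpace q e')).measurableSet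
  simp only [← integral_indicator (hmeas _)]
  refine continuousAt_of_dominated (bound := fun x => ‖K.indicator F x‖)
    (Eventually.of_forall fun e' => (hF.measurable.indicator (hmeas e')).aestronglyMeasurable)
    (Eventually.of_forall fun e' => ae_of_all _ fun x =>
      norm_indicator_le_of_subset inter_subset_left F x)
    ((integrable_indicator_iff hopen.measurableSet).2 hintg).norm ?_
  filter_upwards [ae_inner_sub_ne_zero q he] with x hx
  exact continuousAt_indicator_inter_halfSpace hx

-- Opposite half-spaces contribute opposite integrals, and the unit sphere is connected.
theorem exists_norm_eq_one_setIntegral_halfSpace_eq_zero (hrank : 1 < Module.rank ℝ E)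
    (hopen : IsOpen K) (hF : Continuous F) (hintg : IntegrableOn F K)
    (hmean : ∫ x in K, F x = 0) (q : E) :
    ∃ e, ‖e‖ = 1 ∧ ∫ x in K ∩ halfSpace q e, F x = 0 ∧ ∫ x in K ∩ halfSpace q (-e), F x = 0 := by
  have hne : ∀ {e : E}, e ∈ Metric.sphere (0 : E) 1 → e ≠ 0 := fun he =>
    Metric.ne_of_mem_sphere he one_ne_zero
  have hsplit : ∀ {e : E}, e ∈ Metric.sphere (0 : E) 1 →
      (∫ x in K ∩ halfSpace q e, F x) + ∫ x in K ∩ halfSpace q (-e), F x = 0 := fun he => by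
    rw [← setIntegral_eq_add_halfSpace hopen hintg q (hne he), hmean]
  have hcont : ContinuousOn (fun e => ∫ x in K ∩ halfSpace q e, F x) (Metric.sphere 0 1) :=
    fun e he =>
      (continuousAt_setIntegral_inter_halfSpace hopen hF hintg q (hne he)).continuousWithinAt
  have hconn := isPreconnected_sphere hrank (0 : E) 1
  obtain ⟨e₀, he₀⟩ := (isConnected_sphere hrank (0 : E) zero_le_one).nonempty
  have he₀' : -e₀ ∈ Metric.sphere (0 : E) 1 := by simpa using he₀
  obtain ⟨e, he, hzero⟩ : ∃ e ∈ Metric.sphere (0 : E) 1, ∫ x in K ∩ halfSpace q e, F x = 0 := by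
    rcases le_total (∫ x in K ∩ halfSpace q e₀, F x) 0 with h | h
    · exact hconn.intermediate_value he₀ he₀' hcont ⟨h, by linarith [hsplit he₀]⟩
    · exact hconn.intermediate_value he₀' he₀ hcont ⟨by linarith [hsplit he₀], h⟩
  exact ⟨e, by simpa using he, hzero, by linarith [hsplit he]⟩

theorem volume_real_inter_halfSpace_le {q e : E} {ε : ℝ} (hε : 0 < ε) (he : ‖e‖ = 1)
    (hbd : Bornology.IsBounded K) (hball : Metric.ball q (2 * ε) ⊆ K) :
    volume.real (K ∩ halfSpace q e) ≤ volume.real K - volume.real (Metric.ball (0 : E) ε) := by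
  have he' : ‖-e‖ = 1 := by rwa [norm_neg]
  set B := Metric.ball (q + ε • -e) ε
  have hBK : B ⊆ K := (ball_add_smul_subset_ball he' hε).trans hball
  have hdisj : Disjoint (K ∩ halfSpace q e) B :=
    (disjoint_halfSpace_neg q e).mono inter_subset_right (ball_subset_halfSpace he' ε)
  have hle : volume.real (K ∩ halfSpace q e ∪ B) ≤ volume.real K :=
    measureReal_mono (union_subset inter_subset_left hBK) hbd.measure_lt_top.ne
  rw [measureReal_union hdisj Metric.isOpen_ball.measurableSet
    (hbd.subset inter_subset_left).measure_lt_top.ne measure_ball_lt_top.ne,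
    Measure.addHaar_real_ball_center] at hle
  linarith

/-- A nonempty open convex part `K` of `Ω` over which `u` has mean zero while `Q` has mean at most
`-δ`. Halving keeps one such part, so that a counterexample to the Payne–Weinberger inequality can
be localised to thin sets. -/
structure IsDeficientPiece (Ω : Set E) (u Q : E → ℝ) (δ : ℝ) (K : Set E) : Prop where
  subset : K ⊆ Ω
  isOpen : IsOpen K
  convex : Convex ℝ K
  nonempty : K.Nonempty
  mean_eq_zero : ∫ x in K, u x = 0
  integral_le : ∫ x in K, Q x ≤ -δ * volume.real K

variable {Ω : Set E} {u Q : E → ℝ} {δ ε : ℝ}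

theorem IsDeficientPiece.inter_halfSpace (hK : IsDeficientPiece Ω u Q δ K) {q e : E} (hε : 0 < ε)
    (he : ‖e‖ = 1) (hball : Metric.ball q (2 * ε) ⊆ K)
    (hmean : ∫ x in K ∩ halfSpace q e, u x = 0)
    (hle : ∫ x in K ∩ halfSpace q e, Q x ≤ -δ * volume.real (K ∩ halfSpace q e)) :
    IsDeficientPiece Ω u Q δ (K ∩ halfSpace q e) where
  subset := inter_subset_left.trans hK.subset
  isOpen := hK.isOpen.inter (isOpen_halfSpace q e)
  convex := hK.convex.inter (convex_halfSpace q e)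
  nonempty := ⟨q + ε • e, hball (ball_add_smul_subset_ball he hε (Metric.mem_ball_self hε)),
    ball_subset_halfSpace he ε (Metric.mem_ball_self hε)⟩
  mean_eq_zero := hmean
  integral_le := hle

theorem IsDeficientPiece.exists_volume_real_le (hrank : 1 < Module.rank ℝ E)
    (hbd : Bornology.IsBounded Ω) (hu : Continuous u) (hQ : Continuous Q)
    (hK : IsDeficientPiece Ω u Q δ K) {q : E} (hε : 0 < ε) (hball : Metric.ball q (2 * ε) ⊆ K) :
    ∃ K', IsDeficientPiece Ω u Q δ K' ∧
      volume.real K' ≤ volume.real K - volume.real (Metric.ball (0 : E) ε) := by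
  have hKbd := hbd.subset hK.subset
  obtain ⟨e, he, hmean, hmean'⟩ := exists_norm_eq_one_setIntegral_halfSpace_eq_zero hrank hK.isOpen
    hu (integrableOn_of_continuous_of_isBounded hu hKbd) hK.mean_eq_zero q
  have he' : ‖-e‖ = 1 := by rwa [norm_neg]
  have he0 : e ≠ 0 := norm_ne_zero_iff.1 (he ▸ one_ne_zero)
  by_cases hle : ∫ x in K ∩ halfSpace q e, Q x ≤ -δ * volume.real (K ∩ halfSpace q e)
  · exact ⟨_, hK.inter_halfSpace hε he hball hmean hle,
      volume_real_inter_halfSpace_le hε he hKbd hball⟩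
  · refine ⟨_, hK.inter_halfSpace hε he' hball hmean' ?_,
      volume_real_inter_halfSpace_le hε he' hKbd hball⟩
    have hsplitQ := setIntegral_eq_add_halfSpace hK.isOpen
      (integrableOn_of_continuous_of_isBounded hQ hKbd) q he0
    have hsplitVol := setIntegral_eq_add_halfSpace hK.isOpen
      (integrableOn_of_continuous_of_isBounded (continuous_const (y := (1 : ℝ))) hKbd) q he0
    simp only [setIntegral_const, smul_eq_mul, mul_one] at hsplitVol
    have htotal := hK.integral_le
    rw [hsplitQ, hsplitVol] at htotal
    linarith

theorem IsDeficientPiece.exists_forall_not_ball_subset (hrank : 1 < Module.rank ℝ E)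
    (hbd : Bornology.IsBounded Ω) (hu : Continuous u) (hQ : Continuous Q)
    (hΩ : IsDeficientPiece Ω u Q δ Ω) (hε : 0 < ε) :
    ∃ K, IsDeficientPiece Ω u Q δ K ∧ ∀ q, ¬ Metric.ball q (2 * ε) ⊆ K := by
  by_contra! hcon
  set S := volume.real '' {K | IsDeficientPiece Ω u Q δ K}
  have hbelow : BddBelow S := ⟨0, by rintro _ ⟨K, -, rfl⟩; exact measureReal_nonneg⟩
  have hloss : 0 < volume.real (Metric.ball (0 : E) ε) :=
    volume_real_pos_of_isOpen ⟨0, Metric.mem_ball_self hε⟩ Metric.isOpen_ball Metric.isBounded_ball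
  obtain ⟨_, ⟨K, hK, rfl⟩, hlt⟩ := exists_lt_of_csInf_lt (s := S) ⟨_, Ω, hΩ, rfl⟩
    (lt_add_of_pos_right (sInf S) hloss)
  obtain ⟨q, hq⟩ := hcon K hK
  obtain ⟨K', hK', hle⟩ := hK.exists_volume_real_le hrank hbd hu hQ hε hq
  linarith [csInf_le hbelow ⟨K', hK', rfl⟩]

end Bisection

section PayneWeinberger

theorem IsBalanced.weight_mul_sub_inner_le {ι E : Type*} [Fintype ι] [NormedAddCommGroup E]
    [InnerProductSpace ℝ E] {w : ι → ℝ} {n : ι → E} (h : IsBalanced w n) {x : E} {r : ℝ}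
    (hx : ∀ j, ⟪x, n j⟫ ≤ r) (i : ι) : w i * (r - ⟪x, n i⟫) ≤ r :=
  calc w i * (r - ⟪x, n i⟫) ≤ ∑ j, w j * (r - ⟪x, n j⟫) :=
        Finset.single_le_sum (f := fun j => w j * (r - ⟪x, n j⟫))
          (fun j _ => mul_nonneg (h.weight_nonneg j) (sub_nonneg.2 (hx j))) (Finset.mem_univ i)
    _ = r := by
        simp only [mul_sub, Finset.sum_sub_distrib, ← Finset.sum_mul, h.sum_weight,
          h.sum_weight_mul_inner x, one_mul, sub_zero]

variable {K : Set E2}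

theorem exists_inscribed_ball_subset_strip (hne : K.Nonempty) (hopen : IsOpen K)
    (hbd : Bornology.IsBounded K) (hconv : Convex ℝ K) :
    ∃ (p : E2) (r : ℝ) (b : OrthonormalBasis (Fin 2) ℝ E2),
      0 < r ∧ Metric.ball p r ⊆ K ∧ ∀ x ∈ K, |⟪x - p, b 1⟫| ≤ 2 * r := by
  obtain ⟨p, r, w, n, hr, hball, hbal, hlt⟩ :=
    exists_inscribed_ball_balanced hne hopen hbd hconv (N := 3) (by simp)
  obtain ⟨i, -, hi⟩ : ∃ i ∈ Finset.univ, 1 / 3 ≤ w i :=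
    Finset.exists_le_of_sum_le Finset.univ_nonempty (by simp [hbal.sum_weight])
  obtain ⟨b, hb⟩ := exists_orthonormalBasis_one_eq (hbal.norm_eq_one i)
  refine ⟨p, r, b, hr, hball, fun x hx => ?_⟩
  have hupper := hlt i x hx
  have hweight := hbal.weight_mul_sub_inner_le (fun j => (hlt j x hx).le) i
  rw [hb, abs_le]
  constructor <;> nlinarith

theorem exists_forall_dist_lt_norm_sub_le {X F : Type*} [PseudoMetricSpace X] [ProperSpace X]
    [SeminormedAddCommGroup F] {S : Set X} (hS : Bornology.IsBounded S) {g : X → F}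
    (hg : Continuous g) {η : ℝ} (hη : 0 < η) :
    ∃ ε > 0, ∀ x ∈ S, ∀ y, dist x y < ε → ‖g x - g y‖ ≤ η := by
  have hunif := hS.isCompact_closure.uniformContinuousAt_of_continuousAt g
    (fun x _ => hg.continuousAt) (Metric.dist_mem_uniformity hη)
  obtain ⟨ε, hε, h⟩ := Metric.mem_uniformity_dist.1 hunif
  refine ⟨ε, hε, fun x hx y hxy => ?_⟩
  rw [← dist_eq_norm]
  exact (h hxy (subset_closure hx)).le

theorem abs_sq_sub_sq_le {s t M η : ℝ} (hs : |s| ≤ M) (hst : |s - t| ≤ η) :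
    |s ^ 2 - t ^ 2| ≤ (2 * M + η) * η := by
  have hadd : |s + t| ≤ 2 * M + η := by
    rw [show s + t = 2 * s - (s - t) by ring]
    refine (abs_sub _ _).trans ?_
    rw [abs_mul, abs_two]
    linarith
  rw [sq_sub_sq, abs_mul]
  exact mul_le_mul hadd hst (abs_nonneg _) ((abs_nonneg _).trans hadd)

theorem abs_setIntegral_sub_setIntegral_le {X : Type*} [MeasurableSpace X] {μ : Measure X}
    {S : Set X} {F G : X → ℝ} {κ : ℝ} (hS : μ S < ⊤) (hF : IntegrableOn F S μ)
    (hG : IntegrableOn G S μ) (h : ∀ x ∈ S, |F x - G x| ≤ κ) :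
    |(∫ x in S, F x ∂μ) - ∫ x in S, G x ∂μ| ≤ κ * μ.real S := by
  rw [← integral_sub hF hG]
  simp only [← Real.norm_eq_abs] at h ⊢
  exact norm_setIntegral_le_of_norm_le_const hS h

theorem mul_sub_le_of_perturbed {c A A' B B' I V κ η : ℝ} (hV : 0 < V) (hc : 0 ≤ c)
    (hvar : c * (A' * V - I ^ 2) ≤ B' * V) (hI : |I| ≤ η * V) (hA : A - A' ≤ κ * V)
    (hB : B' - B ≤ κ * V) : c * A - B ≤ ((c + 1) * κ + c * η ^ 2) * V := by
  have hIsq : I ^ 2 ≤ (η * V) ^ 2 := sq_le_sq' (abs_le.1 hI).1 (abs_le.1 hI).2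
  refine le_of_mul_le_mul_right ?_ hV
  linarith [mul_le_mul_of_nonneg_left hIsq hc, mul_le_mul_of_nonneg_right hB hV.le,
    mul_le_mul_of_nonneg_left (mul_le_mul_of_nonneg_right hA hV.le) hc]

variable {u : E2 → ℝ} {L M η : ℝ}

theorem sq_mul_variance_comp_framePoint_le (hu : ContDiff ℝ 1 u) (hne : K.Nonempty)
    (hopen : IsOpen K) (hconv : Convex ℝ K) (hbd : Bornology.IsBounded K)
    (hL : ∀ x ∈ K, ∀ y ∈ K, dist x y ≤ L) (p : E2) (b : OrthonormalBasis (Fin 2) ℝ E2) :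
    (π / L) ^ 2 * ((∫ x in K, u (framePoint p b (⟪x - p, b 0⟫, 0)) ^ 2) * volume.real K -
        (∫ x in K, u (framePoint p b (⟪x - p, b 0⟫, 0))) ^ 2) ≤
      (∫ x in K, ‖fderiv ℝ u (framePoint p b (⟪x - p, b 0⟫, 0))‖ ^ 2) * volume.real K := by
  have : Continuous (fderiv ℝ u) := hu.continuous_fderiv one_ne_zero
  have hderiv : ∀ s, HasDerivAt (fun s => u (framePoint p b (s, 0)))
      (fderiv ℝ u (framePoint p b (s, 0)) (b 0)) s := fun s =>
    (hu.differentiable one_ne_zero _).hasFDerivAt.comp_hasDerivAt s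
      (hasDerivAt_framePoint_fst p b s 0)
  refine (sq_mul_variance_comp_inner_le p b hne hopen hconv hbd hL hderiv (by fun_prop)).trans
    (mul_le_mul_of_nonneg_right ?_ measureReal_nonneg)
  exact setIntegral_mono (integrableOn_of_continuous_of_isBounded (by fun_prop) hbd)
    (integrableOn_of_continuous_of_isBounded (by fun_prop) hbd)
    fun x => sq_apply_le_sq_norm _ (b.norm_eq_one 0)

theorem sq_mul_setIntegral_sq_le_of_close_to_foot (hu : ContDiff ℝ 1 u) (hne : K.Nonempty)
    (hopen : IsOpen K) (hconv : Convex ℝ K) (hbd : Bornology.IsBounded K)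
    (hL : ∀ x ∈ K, ∀ y ∈ K, dist x y ≤ L) (p : E2) (b : OrthonormalBasis (Fin 2) ℝ E2)
    (hmean : ∫ x in K, u x = 0) (hη : η ≤ 1)
    (huM : ∀ x ∈ K, |u x| ≤ M) (hduM : ∀ x ∈ K, ‖fderiv ℝ u x‖ ≤ M)
    (hclose : ∀ x ∈ K, |u x - u (framePoint p b (⟪x - p, b 0⟫, 0))| ≤ η)
    (hdclose : ∀ x ∈ K, ‖fderiv ℝ u x - fderiv ℝ u (framePoint p b (⟪x - p, b 0⟫, 0))‖ ≤ η) :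
    (π / L) ^ 2 * (∫ x in K, u x ^ 2) - ∫ x in K, ‖fderiv ℝ u x‖ ^ 2 ≤
      ((π / L) ^ 2 + 1) * ((2 * M + 2) * η) * volume.real K := by
  have : Continuous (fderiv ℝ u) := hu.continuous_fderiv one_ne_zero
  have hintg : ∀ {F : E2 → ℝ}, Continuous F → IntegrableOn F K := fun hF =>
    integrableOn_of_continuous_of_isBounded hF hbd
  have hη0 : 0 ≤ η := (abs_nonneg _).trans (hclose _ hne.some_mem)
  have hvol : 0 < volume.real K := volume_real_pos_of_isOpen hne hopen hbd
  have hvar := sq_mul_variance_comp_framePoint_le hu hne hopen hconv hbd hL p b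
  have hI := abs_setIntegral_sub_setIntegral_le hbd.measure_lt_top (hintg (by fun_prop))
    (hintg (by fun_prop)) hclose
  have hI2 := abs_setIntegral_sub_setIntegral_le hbd.measure_lt_top (hintg (by fun_prop))
    (hintg (by fun_prop)) fun x hx => abs_sq_sub_sq_le (huM x hx) (hclose x hx)
  have hD2 := abs_setIntegral_sub_setIntegral_le hbd.measure_lt_top (hintg (by fun_prop))
    (hintg (by fun_prop)) fun x hx => abs_sq_sub_sq_le ((abs_norm _).trans_le (hduM x hx))
      ((abs_norm_sub_norm_le _ _).trans (hdclose x hx))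
  rw [hmean, zero_sub, abs_neg] at hI
  refine (mul_sub_le_of_perturbed hvol (sq_nonneg _) hvar hI (abs_le.1 hI2).2
    (by linarith [(abs_le.1 hD2).1])).trans (mul_le_mul_of_nonneg_right ?_ hvol.le)
  have hηsq : η * η ≤ η := mul_le_of_le_one_left hη0 hη
  nlinarith [sq_nonneg (π / L)]

theorem dist_framePoint_inner_zero (p : E2) (b : OrthonormalBasis (Fin 2) ℝ E2) (x : E2) :
    dist x (framePoint p b (⟪x - p, b 0⟫, 0)) = |⟪x - p, b 1⟫| := by
  conv_lhs => rw [← framePoint_inner_sub p b x, inner_framePoint_sub_zero]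
  simp [framePoint, norm_smul]

variable {Ω : Set E2}

theorem IsDeficientPiece.exists_frame_dist_foot_lt {Q : E2 → ℝ} {δ ε : ℝ}
    (hbd : Bornology.IsBounded Ω) (hu : Continuous u) (hQ : Continuous Q)
    (hΩ : IsDeficientPiece Ω u Q δ Ω) (hε : 0 < ε) :
    ∃ (K : Set E2) (p : E2) (b : OrthonormalBasis (Fin 2) ℝ E2), IsDeficientPiece Ω u Q δ K ∧
      ∀ x ∈ K, dist x (framePoint p b (⟪x - p, b 0⟫, 0)) < ε := by
  have hrank : 1 < Module.rank ℝ E2 := by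
    rw [← Module.finrank_eq_rank, finrank_euclideanSpace_fin]
    norm_num
  obtain ⟨K, hK, hthin⟩ := hΩ.exists_forall_not_ball_subset hrank hbd hu hQ
    (ε := ε / 4) (by linarith)
  obtain ⟨p, r, b, -, hball, hstrip⟩ :=
    exists_inscribed_ball_subset_strip hK.nonempty hK.isOpen (hbd.subset hK.subset) hK.convex
  have hr : r < 2 * (ε / 4) := by
    by_contra! hle
    exact hthin p ((Metric.ball_subset_ball hle).trans hball)
  refine ⟨K, p, b, hK, fun x hx => ?_⟩
  rw [dist_framePoint_inner_zero]
  linarith [hstrip x hx]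

theorem setIntegral_norm_fderiv_sq_sub {c : ℝ} (hbd : Bornology.IsBounded K)
    (hu : ContDiff ℝ 1 u) :
    ∫ x in K, (‖fderiv ℝ u x‖ ^ 2 - c * u x ^ 2) =
      (∫ x in K, ‖fderiv ℝ u x‖ ^ 2) - c * ∫ x in K, u x ^ 2 := by
  have : Continuous (fderiv ℝ u) := hu.continuous_fderiv one_ne_zero
  rw [← integral_const_mul, ← integral_sub]
  · exact integrableOn_of_continuous_of_isBounded (by fun_prop) hbd
  · exact integrableOn_of_continuous_of_isBounded (by fun_prop) hbd

theorem exists_isDeficientPiece_of_lt {c : ℝ} (hne : Ω.Nonempty) (hopen : IsOpen Ω)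
    (hbd : Bornology.IsBounded Ω) (hconv : Convex ℝ Ω) (hu : ContDiff ℝ 1 u)
    (hmean : ∫ x in Ω, u x = 0)
    (hlt : ∫ x in Ω, ‖fderiv ℝ u x‖ ^ 2 < c * ∫ x in Ω, u x ^ 2) :
    ∃ δ > 0, IsDeficientPiece Ω u (fun x => ‖fderiv ℝ u x‖ ^ 2 - c * u x ^ 2) δ Ω := by
  have hvol := volume_real_pos_of_isOpen hne hopen hbd
  refine ⟨(c * (∫ x in Ω, u x ^ 2) - ∫ x in Ω, ‖fderiv ℝ u x‖ ^ 2) / volume.real Ω,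
    div_pos (sub_pos.2 hlt) hvol, subset_rfl, hopen, hconv, hne, hmean, le_of_eq ?_⟩
  rw [setIntegral_norm_fderiv_sq_sub hbd hu, neg_mul, div_mul_cancel₀ _ hvol.ne', neg_sub]

-- Payne–Weinberger: bisecting a counterexample yields a deficient piece so thin that `u` is nearly
-- a function of one variable there, and the weighted one-dimensional inequality applies.
theorem sq_mul_setIntegral_sq_le_setIntegral_norm_fderiv_sq (hne : Ω.Nonempty) (hopen : IsOpen Ω)
    (hbd : Bornology.IsBounded Ω) (hconv : Convex ℝ Ω) {D : ℝ}
    (hD : ∀ x ∈ Ω, ∀ y ∈ Ω, dist x y ≤ D) (hu : ContDiff ℝ 1 u) (hmean : ∫ x in Ω, u x = 0) :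
    (π / D) ^ 2 * ∫ x in Ω, u x ^ 2 ≤ ∫ x in Ω, ‖fderiv ℝ u x‖ ^ 2 := by
  by_contra! hlt
  set c := (π / D) ^ 2
  have hdu : Continuous (fderiv ℝ u) := hu.continuous_fderiv one_ne_zero
  have hjet : Continuous fun x => (u x, fderiv ℝ u x) := hu.continuous.prodMk hdu
  obtain ⟨δ, hδ, hΩ⟩ := exists_isDeficientPiece_of_lt hne hopen hbd hconv hu hmean hlt
  obtain ⟨M, hM⟩ := hbd.isCompact_closure.exists_bound_of_continuousOn hjet.continuousOn
  obtain ⟨η₀, hη₀, hη₀lt⟩ := exists_pos_mul_lt hδ ((c + 1) * (2 * M + 2))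
  have hM0 : 0 ≤ M := (norm_nonneg _).trans (hM _ (subset_closure hne.some_mem))
  have hη : (c + 1) * ((2 * M + 2) * min 1 η₀) < δ := by
    refine lt_of_le_of_lt ?_ hη₀lt
    rw [← mul_assoc]
    exact mul_le_mul_of_nonneg_left (min_le_right _ _) (by positivity)
  obtain ⟨ε, hε, hclose⟩ := exists_forall_dist_lt_norm_sub_le hbd hjet (lt_min one_pos hη₀)
  obtain ⟨K, p, b, hK, hfoot⟩ :=
    hΩ.exists_frame_dist_foot_lt hbd hu.continuous (by fun_prop) hε
  have hKbd := hbd.subset hK.subset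
  have hthin := sq_mul_setIntegral_sq_le_of_close_to_foot hu hK.nonempty hK.isOpen hK.convex hKbd
    (fun x hx y hy => hD x (hK.subset hx) y (hK.subset hy)) p b hK.mean_eq_zero (min_le_left 1 η₀)
    (fun x hx => (norm_fst_le _).trans (hM x (subset_closure (hK.subset hx))))
    (fun x hx => (norm_snd_le _).trans (hM x (subset_closure (hK.subset hx))))
    (fun x hx => (norm_fst_le _).trans (hclose x (hK.subset hx) _ (hfoot x hx)))
    (fun x hx => (norm_snd_le _).trans (hclose x (hK.subset hx) _ (hfoot x hx)))
  have hdeficient := hK.integral_le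
  rw [setIntegral_norm_fderiv_sq_sub hKbd hu] at hdeficient
  have hvol := volume_real_pos_of_isOpen hK.nonempty hK.isOpen hKbd
  linarith [mul_lt_mul_of_pos_right hη hvol]

end PayneWeinberger

section IntegralStrictMono

variable {α : Type*} [MeasurableSpace α] {μ : Measure α} {f g : α → ℝ} {S : Set α}

theorem integral_lt_integral_of_ae_le_of_forall_mem_lt (hf : Integrable f μ) (hg : Integrable g μ)
    (hle : f ≤ᵐ[μ] g) (hS : μ S ≠ 0) (hlt : ∀ᵐ x ∂μ, x ∈ S → f x < g x) :
    ∫ x, f x ∂μ < ∫ x, g x ∂μ := by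
  rw [← sub_pos, ← integral_sub hg hf, integral_pos_iff_support_of_nonneg_ae
    (hle.mono fun x hx => sub_nonneg.2 hx) (hg.sub hf)]
  refine (pos_iff_ne_zero.2 hS).trans_le (measure_mono_ae ?_)
  filter_upwards [hlt] with x hx hxS
  exact (sub_pos.2 (hx hxS)).ne'

end IntegralStrictMono

section Tent

/-- The tent function with peak value `1` at `0` and zeros at `a < 0 < b`. -/
def tent (a b s : ℝ) : ℝ := 1 - max (s / b) (s / a)

variable {a b s : ℝ}

@[fun_prop]
theorem continuous_tent (a b : ℝ) : Continuous (tent a b) := by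
  unfold tent
  fun_prop

theorem tent_of_nonneg (ha : a ≤ 0) (hb : 0 ≤ b) (hs : 0 ≤ s) : tent a b s = 1 - s / b := by
  rw [tent, max_eq_left ((div_nonpos_of_nonneg_of_nonpos hs ha).trans (div_nonneg hs hb))]

theorem tent_of_nonpos (ha : a ≤ 0) (hb : 0 ≤ b) (hs : s ≤ 0) : tent a b s = 1 - s / a := by
  rw [tent, max_eq_right ((div_nonpos_of_nonpos_of_nonneg hs hb).trans
    (div_nonneg_of_nonpos hs ha))]

theorem integral_one_sub_div {c : ℝ} (hc : c ≠ 0) : ∫ s in (0 : ℝ)..c, (1 - s / c) = c / 2 := by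
  rw [intervalIntegral.integral_sub (by simp)
    ((by fun_prop : Continuous fun s : ℝ => s / c).intervalIntegrable _ _),
    intervalIntegral.integral_div, integral_id, intervalIntegral.integral_const]
  simp only [smul_eq_mul]
  field_simp
  ring

theorem integral_tent (ha : a < 0) (hb : 0 < b) : ∫ s in a..b, tent a b s = (b - a) / 2 := by
  have hintg (c d : ℝ) : IntervalIntegrable (tent a b) volume c d :=
    (continuous_tent a b).intervalIntegrable c d
  have hleft : ∫ s in (0 : ℝ)..a, tent a b s = a / 2 := by
    rw [← integral_one_sub_div ha.ne]
    refine intervalIntegral.integral_congr fun s hs => ?_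
    exact tent_of_nonpos ha.le hb.le ((uIcc_of_ge ha.le ▸ hs : s ∈ Icc a 0).2)
  have hright : ∫ s in (0 : ℝ)..b, tent a b s = b / 2 := by
    rw [← integral_one_sub_div hb.ne']
    refine intervalIntegral.integral_congr fun s hs => ?_
    exact tent_of_nonneg ha.le hb.le ((uIcc_of_le hb.le ▸ hs : s ∈ Icc 0 b).1)
  rw [← intervalIntegral.integral_interval_sub_left (hintg 0 b) (hintg 0 a), hleft, hright]
  ring

theorem mul_one_sub_div_le_of_concaveOn {I : Set ℝ} {h : ℝ → ℝ} {m c : ℝ}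
    (hconc : ConcaveOn ℝ I h) (hzero : 0 ∈ I) (hc : c ∈ I) (hc0 : c ≠ 0) (hhc : 0 ≤ h c)
    (hm : m ≤ h 0) (hs0 : 0 ≤ s / c) (hs1 : s / c ≤ 1) : m * (1 - s / c) ≤ h s := by
  have hs1' : 0 ≤ 1 - s / c := sub_nonneg.2 hs1
  have hineq := hconc.2 hc hzero hs0 hs1' (add_sub_cancel _ _)
  simp only [smul_eq_mul, mul_zero, add_zero, div_mul_cancel₀ s hc0] at hineq
  nlinarith [mul_nonneg hs0 hhc, mul_le_mul_of_nonneg_left hm hs1']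

theorem mul_tent_le_of_concaveOn {h : ℝ → ℝ} {m : ℝ} (hconc : ConcaveOn ℝ (Ioo a b) h)
    (hnonneg : ∀ x ∈ Ioo a b, 0 ≤ h x) (ha : a < 0) (hb : 0 < b) (hm : m ≤ h 0)
    (hs : s ∈ Ioo a b) : m * tent a b s ≤ h s := by
  -- The chords over `[0, c]` need `c` inside the interval, so let `c` tend to the endpoint.
  have htendsto {c : ℝ} (hc : c ≠ 0) (S : Set ℝ) :
      Tendsto (fun x => m * (1 - s / x)) (nhdsWithin c S) (nhds (m * (1 - s / c))) :=
    (by fun_prop (disch := assumption) : ContinuousAt (fun x => m * (1 - s / x)) c).mono_left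
      nhdsWithin_le_nhds
  rcases le_total 0 s with hs0 | hs0
  · rw [tent_of_nonneg ha.le hb.le hs0]
    refine le_of_tendsto (htendsto hb.ne' (Iio b)) ?_
    filter_upwards [Ioo_mem_nhdsLT hs.2] with c hc
    have hc0 : 0 < c := hs0.trans_lt hc.1
    have hcI : c ∈ Ioo a b := ⟨ha.trans hc0, hc.2⟩
    exact mul_one_sub_div_le_of_concaveOn hconc ⟨ha, hb⟩ hcI hc0.ne' (hnonneg c hcI) hm
      (div_nonneg hs0 hc0.le) ((div_le_one hc0).2 hc.1.le)
  · rw [tent_of_nonpos ha.le hb.le hs0]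
    refine le_of_tendsto (htendsto ha.ne (Ioi a)) ?_
    filter_upwards [Ioo_mem_nhdsGT hs.1] with c hc
    have hc0 : c < 0 := hc.2.trans_le hs0
    have hcI : c ∈ Ioo a b := ⟨hc.1, hc0.trans hb⟩
    exact mul_one_sub_div_le_of_concaveOn hconc ⟨ha, hb⟩ hcI hc0.ne (hnonneg c hcI) hm
      (div_nonneg_of_nonpos hs0 hc0.le) ((div_le_one_of_neg hc0).2 hc.2.le)

end Tent

section AreaBound

theorem exists_forall_mul_one_sub_div_lt_sqrt {r b : ℝ} (hr : r ≠ 0) (hb : 0 < b) :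
    ∃ δ > 0, δ ≤ b ∧ ∀ s ∈ Ioo 0 δ, r * (1 - s / b) < √(r ^ 2 - s ^ 2) := by
  refine ⟨min b (2 * b * r ^ 2 / (b ^ 2 + r ^ 2)), lt_min hb (by positivity), min_le_left _ _,
    fun s ⟨hs0, hs⟩ => Real.lt_sqrt_of_sq_lt ?_⟩
  have hs' := hs.trans_le (min_le_right _ _)
  rw [lt_div_iff₀ (by positivity)] at hs'
  rw [show r * (1 - s / b) = r * (b - s) / b by field_simp, div_pow, div_lt_iff₀ (by positivity)]
  nlinarith

theorem exists_dist_eq_diam_of_isBounded {X : Type*} [MetricSpace X] [ProperSpace X] {K : Set X}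
    (hne : K.Nonempty) (hbd : Bornology.IsBounded K) :
    ∃ x ∈ closure K, ∃ y ∈ closure K, dist x y = Metric.diam K := by
  have hcomp := hbd.isCompact_closure
  obtain ⟨⟨x, y⟩, ⟨hx, hy⟩, hmax⟩ := (hcomp.prod hcomp).exists_isMaxOn
    (hne.closure.prod hne.closure) (continuous_dist (α := X)).continuousOn
  refine ⟨x, hx, y, hy, le_antisymm ?_ ?_⟩
  · rw [← Metric.diam_closure]
    exact Metric.dist_le_diam_of_mem hcomp.isBounded hx hy
  · exact Metric.diam_le_of_forall_dist_le dist_nonneg fun z hz z' hz' =>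
      hmax (mk_mem_prod (subset_closure hz) (subset_closure hz'))

variable {K : Set E2} {p : E2} {r : ℝ}

theorem two_mul_sqrt_le_sliceLength (b : OrthonormalBasis (Fin 2) ℝ E2)
    (hbd : Bornology.IsBounded K) (hr : 0 ≤ r) (hball : Metric.ball p r ⊆ K) (s : ℝ) :
    2 * √(r ^ 2 - s ^ 2) ≤ sliceLength K p b s := by
  rw [two_mul, ← sub_neg_eq_add]
  refine sub_le_sliceLength p b hbd fun y hy => hball ?_
  have hy2 : y ^ 2 < r ^ 2 - s ^ 2 := by
    rw [← sq_abs]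
    exact (Real.lt_sqrt (abs_nonneg y)).1 (abs_lt.2 hy)
  rw [mem_ball_iff_norm, ← pow_lt_pow_iff_left₀ (norm_nonneg _) hr two_ne_zero,
    norm_framePoint_sub_sq]
  linarith

theorem inner_mem_Icc_of_mem_closure {b : OrthonormalBasis (Fin 2) ℝ E2} {c d : ℝ}
    (hshadow : frameShadow K p b ⊆ Icc c d) {x : E2} (hx : x ∈ closure K) :
    ⟪x - p, b 0⟫ ∈ Icc c d := by
  have hmaps : MapsTo (fun x => ⟪x - p, b 0⟫) K (Icc c d) := fun y hy =>
    hshadow ⟨⟪y - p, b 1⟫, by rwa [frameSlice, mem_ofPred_eq, framePoint_inner_sub]⟩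
  have hmem := hmaps.closure (by fun_prop) hx
  rwa [isClosed_Icc.closure_eq] at hmem

theorem exists_orthonormalBasis_diam_le (hne : K.Nonempty) (hbd : Bornology.IsBounded K)
    (hdiam : Metric.diam K ≠ 0) (p : E2) :
    ∃ b : OrthonormalBasis (Fin 2) ℝ E2,
      ∀ c d, frameShadow K p b ⊆ Icc c d → Metric.diam K ≤ d - c := by
  obtain ⟨x, hx, y, hy, hxy⟩ := exists_dist_eq_diam_of_isBounded hne hbd
  have hnorm : ‖x - y‖ = Metric.diam K := by rw [← dist_eq_norm, hxy]
  have hunit : ‖(Metric.diam K)⁻¹ • (x - y)‖ = 1 := by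
    rw [← hnorm]
    exact norm_smul_inv_norm (𝕜 := ℝ) (norm_ne_zero_iff.1 (hnorm ▸ hdiam))
  obtain ⟨b, hb⟩ := exists_orthonormalBasis_zero_eq hunit
  refine ⟨b, fun c d hshadow => ?_⟩
  have hwidth : ⟪x - p, b 0⟫ - ⟪y - p, b 0⟫ = Metric.diam K := by
    rw [← inner_sub_left, sub_sub_sub_cancel_right, hb, inner_smul_right,
      real_inner_self_eq_norm_sq, hnorm]
    field_simp
  linarith [(inner_mem_Icc_of_mem_closure hshadow hx).2,
    (inner_mem_Icc_of_mem_closure hshadow hy).1]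

theorem mul_tent_le_sliceLength {b : OrthonormalBasis (Fin 2) ℝ E2} {c d s : ℝ}
    (hopen : IsOpen K) (hbd : Bornology.IsBounded K) (hconv : Convex ℝ K) (hr : 0 ≤ r)
    (hball : Metric.ball p r ⊆ K) (hshadow : frameShadow K p b = Ioo c d) (hc : c < 0)
    (hd : 0 < d) (hs : s ∈ Ioo c d) : 2 * r * tent c d s ≤ sliceLength K p b s := by
  have hpeak : 2 * r ≤ sliceLength K p b 0 := by
    simpa [Real.sqrt_sq hr] using two_mul_sqrt_le_sliceLength b hbd hr hball 0
  exact mul_tent_le_of_concaveOn (hshadow ▸ concaveOn_sliceLength p b hopen hconv hbd)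
    (fun _ _ => measureReal_nonneg) hc hd hpeak hs

theorem mul_sub_lt_volume_real {b : OrthonormalBasis (Fin 2) ℝ E2} {c d : ℝ} (hopen : IsOpen K)
    (hbd : Bornology.IsBounded K) (hconv : Convex ℝ K) (hr : 0 < r)
    (hball : Metric.ball p r ⊆ K) (hshadow : frameShadow K p b = Ioo c d) :
    r * (d - c) < volume.real K := by
  obtain ⟨hc, hd⟩ : (0 : ℝ) ∈ Ioo c d := by
    rw [← hshadow]
    exact ⟨0, by simpa [frameSlice, framePoint] using hball (Metric.mem_ball_self hr)⟩
  have hIoc : ∀ᵐ s ∂volume.restrict (Ioc c d), s ∈ Ioo c d := by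
    rw [← Measure.restrict_congr_set Ioo_ae_eq_Ioc]
    exact ae_restrict_mem measurableSet_Ioo
  have hstrict : ∫ s in Ioc c d, 2 * r * tent c d s < ∫ s in Ioc c d, sliceLength K p b s := by
    obtain ⟨δ, hδ, hδd, hlt⟩ := exists_forall_mul_one_sub_div_lt_sqrt hr.ne' hd
    have hsub : Ioo 0 δ ⊆ Ioc c d := fun s hs => ⟨hc.trans hs.1, hs.2.le.trans hδd⟩
    refine integral_lt_integral_of_ae_le_of_forall_mem_lt (S := Ioo 0 δ)
      (integrableOn_of_continuous_of_isBounded (by fun_prop) (Metric.isBounded_Ioc _ _))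
      (integrable_sliceLength p b hopen hbd).restrict
      (hIoc.mono fun s hs =>
        mul_tent_le_sliceLength hopen hbd hconv hr.le hball hshadow hc hd hs)
      (by simpa [Measure.restrict_eq_self _ hsub] using hδ) (ae_of_all _ fun s hs => ?_)
    rw [tent_of_nonneg hc.le hd.le hs.1.le]
    linarith [hlt s hs, two_mul_sqrt_le_sliceLength b hbd hr.le hball s]
  calc r * (d - c) = ∫ s in Ioc c d, 2 * r * tent c d s := by
        rw [integral_const_mul, ← intervalIntegral.integral_of_le (hc.trans hd).le,
          integral_tent hc hd]
        ring
    _ < ∫ s in Ioc c d, sliceLength K p b s := hstrict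
    _ ≤ ∫ s, sliceLength K p b s := setIntegral_le_integral
        (integrable_sliceLength p b hopen hbd) (ae_of_all _ fun _ => measureReal_nonneg)
    _ = volume.real K := (volume_real_eq_integral_sliceLength p b hopen hbd).symm

theorem diam_pos_of_isOpen {E : Type*} [NormedAddCommGroup E] [NormedSpace ℝ E] [Nontrivial E]
    {K : Set E} (hne : K.Nonempty) (hopen : IsOpen K) (hbd : Bornology.IsBounded K) :
    0 < Metric.diam K := by
  obtain ⟨x, hx⟩ := hne
  have := Module.punctured_nhds_neBot ℝ E x
  exact Metric.diam_pos (infinite_of_mem_nhds x (hopen.mem_nhds hx)).nontrivial hbd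

theorem mul_diam_lt_volume_real (hopen : IsOpen K) (hbd : Bornology.IsBounded K)
    (hconv : Convex ℝ K) (hr : 0 < r) (hball : Metric.ball p r ⊆ K) :
    r * Metric.diam K < volume.real K := by
  have hne : K.Nonempty := ⟨p, hball (Metric.mem_ball_self hr)⟩
  obtain ⟨b, hb⟩ :=
    exists_orthonormalBasis_diam_le hne hbd (diam_pos_of_isOpen hne hopen hbd).ne' p
  obtain ⟨c, d, -, hshadow⟩ := exists_frameShadow_eq_Ioo p b hne hopen hconv hbd
  exact (mul_le_mul_of_nonneg_left (hb c d (hshadow ▸ Ioo_subset_Icc_self)) hr.le).trans_lt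
    (mul_sub_lt_volume_real hopen hbd hconv hr hball hshadow)

end AreaBound

section ClippedSine

/-- The odd function that equals `sin` on `[-π/2, π/2]` and is constant on either side. It realises
the half-period of the sine in the one-dimensional test function. -/
def clippedSin (x : ℝ) : ℝ := sin (max (-(π / 2)) (min (π / 2) x))

/-- The derivative of `clippedSin`: the hump of `cos` over `[-π/2, π/2]`, extended by zero. -/
def clippedCos (x : ℝ) : ℝ := cos (max (-(π / 2)) (min (π / 2) x))

@[fun_prop]
theorem continuous_clippedSin : Continuous clippedSin := by
  unfold clippedSin
  fun_prop

@[fun_prop]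
theorem continuous_clippedCos : Continuous clippedCos := by
  unfold clippedCos
  fun_prop

theorem clippedSin_sq_add_clippedCos_sq (x : ℝ) : clippedSin x ^ 2 + clippedCos x ^ 2 = 1 :=
  sin_sq_add_cos_sq _

theorem abs_clippedSin_le_one (x : ℝ) : |clippedSin x| ≤ 1 := abs_sin_le_one _

theorem abs_clippedCos_le_one (x : ℝ) : |clippedCos x| ≤ 1 := abs_cos_le_one _

variable {x : ℝ}

theorem clippedSin_of_pi_div_two_le (hx : π / 2 ≤ x) : clippedSin x = 1 := by
  rw [clippedSin, min_eq_left hx, max_eq_right (by linarith [pi_pos]), sin_pi_div_two]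

theorem clippedSin_of_le_neg_pi_div_two (hx : x ≤ -(π / 2)) : clippedSin x = -1 := by
  rw [clippedSin, max_eq_left ((min_le_right _ _).trans hx), sin_neg, sin_pi_div_two]

theorem clippedCos_of_pi_div_two_le (hx : π / 2 ≤ x) : clippedCos x = 0 := by
  rw [clippedCos, min_eq_left hx, max_eq_right (by linarith [pi_pos]), cos_pi_div_two]

theorem clippedCos_of_le_neg_pi_div_two (hx : x ≤ -(π / 2)) : clippedCos x = 0 := by
  rw [clippedCos, max_eq_left ((min_le_right _ _).trans hx), cos_neg, cos_pi_div_two]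

theorem clippedCos_of_mem_Icc (hx : x ∈ Icc (-(π / 2)) (π / 2)) : clippedCos x = cos x := by
  rw [clippedCos, min_eq_right hx.2, max_eq_right hx.1]

theorem clippedCos_of_notMem_Ioc (hx : x ∉ Ioc (-(π / 2)) (π / 2)) : clippedCos x = 0 := by
  rcases le_or_gt x (-(π / 2)) with hle | hgt
  · exact clippedCos_of_le_neg_pi_div_two hle
  · exact clippedCos_of_pi_div_two_le (not_le.1 fun hle => hx ⟨hgt, hle⟩).le

theorem hasDerivAt_sin_min_pi_div_two (x : ℝ) :
    HasDerivAt (fun x => sin (min (π / 2) x)) (cos (min (π / 2) x)) x := by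
  refine hasDerivAt_of_hasDerivAt_of_ne' (x := π / 2) (f := fun x => sin (min (π / 2) x))
    (g := fun x => cos (min (π / 2) x)) (fun y hy => ?_) (by fun_prop) (by fun_prop) x
  rcases hy.lt_or_gt with hlt | hgt
  · rw [min_eq_right hlt.le]
    refine (hasDerivAt_sin y).congr_of_eventuallyEq ?_
    filter_upwards [Iio_mem_nhds hlt] with z hz using by rw [min_eq_right hz.le]
  · rw [min_eq_left hgt.le, cos_pi_div_two]
    refine (hasDerivAt_const y (sin (π / 2))).congr_of_eventuallyEq ?_
    filter_upwards [Ioi_mem_nhds hgt] with z hz using by rw [min_eq_left hz.le]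

theorem hasDerivAt_clippedSin (x : ℝ) : HasDerivAt clippedSin (clippedCos x) x := by
  refine hasDerivAt_of_hasDerivAt_of_ne' (x := -(π / 2)) (fun y hy => ?_)
    continuous_clippedSin.continuousAt continuous_clippedCos.continuousAt x
  have hneg : -(π / 2) < π / 2 := by linarith [pi_pos]
  rcases hy.lt_or_gt with hlt | hgt
  · rw [clippedCos_of_le_neg_pi_div_two hlt.le]
    refine (hasDerivAt_const y (-1)).congr_of_eventuallyEq ?_
    filter_upwards [Iio_mem_nhds hlt] with z hz using clippedSin_of_le_neg_pi_div_two hz.le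
  · rw [clippedCos, max_eq_right (lt_min hneg hgt).le]
    refine (hasDerivAt_sin_min_pi_div_two y).congr_of_eventuallyEq ?_
    filter_upwards [Ioi_mem_nhds hgt] with z hz using by
      rw [clippedSin, max_eq_right (lt_min hneg hz).le]

theorem integral_clippedCos_sq : ∫ x, clippedCos x ^ 2 = π / 2 := by
  have hle : -(π / 2) ≤ π / 2 := by linarith [pi_pos]
  rw [← setIntegral_eq_integral_of_forall_compl_eq_zero (s := Ioc (-(π / 2)) (π / 2))
      (fun x hx => by rw [clippedCos_of_notMem_Ioc hx]; norm_num),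
    setIntegral_congr_fun measurableSet_Ioc (g := fun x => cos x ^ 2)
      (fun x hx => by simp only [clippedCos_of_mem_Icc (Ioc_subset_Icc_self hx)]),
    ← intervalIntegral.integral_of_le hle, integral_cos_sq]
  simp

theorem integrable_clippedCos_sq : Integrable fun x => clippedCos x ^ 2 := by
  refine Continuous.integrable_of_hasCompactSupport (by fun_prop)
    (HasCompactSupport.intro (isCompact_Icc (a := -(π / 2)) (b := π / 2)) fun x hx => ?_)
  rw [clippedCos_of_notMem_Ioc fun h => hx (Ioc_subset_Icc_self h)]
  norm_num

end ClippedSine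

section OneDimensionalTestFunction

variable {h : ℝ → ℝ} {k M : ℝ}

theorem integral_clippedCos_sq_mul_lt (hintg : Integrable h) (hM : ∀ᵐ x, h x < M) (hk : 0 < k)
    (m : ℝ) : ∫ x, clippedCos (k * (x - m)) ^ 2 * h x < M * (π / (2 * k)) := by
  have hint_sq : Integrable fun x => clippedCos (k * (x - m)) ^ 2 :=
    (integrable_clippedCos_sq.comp_mul_left' hk.ne').comp_sub_right m
  have hintegral : ∫ x, clippedCos (k * (x - m)) ^ 2 = π / (2 * k) := by
    rw [integral_sub_right_eq_self (fun x => clippedCos (k * x) ^ 2),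
      Measure.integral_comp_mul_left (fun x => clippedCos x ^ 2), integral_clippedCos_sq,
      abs_of_pos (inv_pos.2 hk), smul_eq_mul]
    field_simp
  rw [← hintegral, ← integral_const_mul]
  refine integral_lt_integral_of_ae_le_of_forall_mem_lt
    (S := Ioo (m - π / (2 * k)) (m + π / (2 * k))) ?_ (hint_sq.const_mul M) ?_ ?_ ?_
  · refine hintg.bdd_mul (c := 1) (by fun_prop) (ae_of_all _ fun x => ?_)
    rw [norm_pow]
    exact pow_le_one₀ (norm_nonneg _) (abs_clippedCos_le_one _)
  · filter_upwards [hM] with x hx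
    rw [mul_comm M]
    exact mul_le_mul_of_nonneg_left hx.le (sq_nonneg _)
  · rw [Real.volume_Ioo, ne_eq, ENNReal.ofReal_eq_zero, not_le]
    have : 0 < π / (2 * k) := by positivity
    linarith
  · filter_upwards [hM] with x hx hxm
    have hkpi : k * (π / (2 * k)) = π / 2 := by field_simp
    have hmem : k * (x - m) ∈ Ioo (-(π / 2)) (π / 2) := by
      constructor <;> nlinarith [hxm.1, hxm.2]
    rw [mul_comm M, clippedCos_of_mem_Icc (Ioo_subset_Icc_self hmem)]
    exact mul_lt_mul_of_pos_left hx (pow_pos (cos_pos_of_mem_Ioo hmem) 2)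

variable {a b : ℝ}

theorem exists_integral_clippedSin_mul_eq_zero (hintg : Integrable h)
    (hsupp : ∀ x ∉ Ioo a b, h x = 0) (hpos : 0 ≤ ∫ x, h x) (hk : 0 < k) :
    ∃ m, ∫ x, clippedSin (k * (x - m)) * h x = 0 := by
  have hcont : Continuous fun m => ∫ x, clippedSin (k * (x - m)) * h x := by
    refine continuous_of_dominated (bound := fun x => ‖h x‖) (fun m => ?_) (fun m => ?_) hintg.norm
      (ae_of_all _ fun x => by fun_prop)
    · exact (by fun_prop : Continuous fun x => clippedSin (k * (x - m))).aestronglyMeasurable.mul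
        hintg.aestronglyMeasurable
    · refine ae_of_all _ fun x => ?_
      rw [norm_mul]
      exact mul_le_of_le_one_left (norm_nonneg _) (abs_clippedSin_le_one _)
  have hkpi : k * (π / (2 * k)) = π / 2 := by field_simp
  have hleft : ∫ x, clippedSin (k * (x - (a - π / (2 * k)))) * h x = ∫ x, h x := by
    refine integral_congr_ae (ae_of_all _ fun x => ?_)
    by_cases hx : x ∈ Ioo a b
    · simp only [clippedSin_of_pi_div_two_le
        (by nlinarith [hx.1] : π / 2 ≤ k * (x - (a - π / (2 * k)))), one_mul]
    · simp only [hsupp x hx, mul_zero]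
  have hright : ∫ x, clippedSin (k * (x - (b + π / (2 * k)))) * h x = -∫ x, h x := by
    rw [← integral_neg]
    refine integral_congr_ae (ae_of_all _ fun x => ?_)
    by_cases hx : x ∈ Ioo a b
    · simp only [clippedSin_of_le_neg_pi_div_two
        (by nlinarith [hx.2] : k * (x - (b + π / (2 * k))) ≤ -(π / 2)), neg_one_mul]
    · simp only [hsupp x hx, mul_zero, neg_zero]
  exact mem_range_of_exists_le_of_exists_ge hcont ⟨b + π / (2 * k), by linarith⟩
    ⟨a - π / (2 * k), by linarith⟩

theorem contDiff_integral_polynomial_eval (P : Polynomial ℝ) (a : ℝ) :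
    ContDiff ℝ (⊤ : ℕ∞) fun x => ∫ t in a..x, P.eval t := by
  have hderiv : deriv (fun x => ∫ t in a..x, P.eval t) = fun x => P.eval x :=
    funext fun x => (P.continuous.integral_hasStrictDerivAt a x).hasDerivAt.deriv
  rw [contDiff_infty_iff_deriv, hderiv]
  exact ⟨fun x => (P.continuous.integral_hasStrictDerivAt a x).hasDerivAt.differentiableAt,
    P.contDiff_aeval _⟩

variable {g g' : ℝ → ℝ}

theorem exists_contDiff_dist_le_dist_deriv_le (hg : ∀ x, HasDerivAt g (g' x) x)
    (hg' : Continuous g') (a b : ℝ) {ε : ℝ} (hε : 0 < ε) :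
    ∃ U : ℝ → ℝ, ContDiff ℝ (⊤ : ℕ∞) U ∧ ∀ x ∈ Icc a b,
      dist (g x) (U x) ≤ ε * (b - a) ∧ dist (g' x) (deriv U x) ≤ ε := by
  obtain ⟨P, hP⟩ := exists_polynomial_near_of_continuousOn a b g' hg'.continuousOn ε hε
  set U : ℝ → ℝ := fun x => g a + ∫ t in a..x, P.eval t
  have hU (x : ℝ) : HasDerivAt U (P.eval x) x :=
    (P.continuous.integral_hasStrictDerivAt a x).hasDerivAt.const_add (g a)
  refine ⟨U, contDiff_const.add (contDiff_integral_polynomial_eval P a), fun x hx => ⟨?_, ?_⟩⟩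
  · have hmvt := (convex_Icc a b).norm_image_sub_le_of_norm_hasDerivWithin_le
      (f := fun x => U x - g x) (fun y _ => ((hU y).sub (hg y)).hasDerivWithinAt)
      (fun y hy => (hP y hy).le) (left_mem_Icc.2 (hx.1.trans hx.2)) hx
    have hUa : U a - g a = 0 := by simp [U]
    rw [hUa, sub_zero, Real.norm_of_nonneg (sub_nonneg.2 hx.1)] at hmvt
    rw [dist_comm, Real.dist_eq]
    exact hmvt.trans (mul_le_mul_of_nonneg_left (by linarith [hx.2]) hε.le)
  · rw [(hU x).deriv, dist_comm, Real.dist_eq]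
    exact (hP x hx).le

theorem exists_contDiff_tendstoUniformlyOn_deriv (hg : ∀ x, HasDerivAt g (g' x) x)
    (hg' : Continuous g') (a b : ℝ) :
    ∃ U : ℕ → ℝ → ℝ, (∀ n, ContDiff ℝ (⊤ : ℕ∞) (U n)) ∧
      TendstoUniformlyOn U g atTop (Icc a b) ∧
      TendstoUniformlyOn (fun n => deriv (U n)) g' atTop (Icc a b) := by
  choose U hU hUg using fun n : ℕ =>
    exists_contDiff_dist_le_dist_deriv_le hg hg' a b (Nat.one_div_pos_of_nat (α := ℝ) (n := n))
  have hlim := tendsto_one_div_add_atTop_nhds_zero_nat (𝕜 := ℝ)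
  refine ⟨U, hU, Metric.tendstoUniformlyOn_iff.2 fun ε hε => ?_,
    Metric.tendstoUniformlyOn_iff.2 fun ε hε => ?_⟩
  · have hlim' := hlim.mul_const (b - a)
    rw [zero_mul] at hlim'
    filter_upwards [hlim'.eventually_lt_const hε] with n hn x hx
    exact (hUg n x hx).1.trans_lt hn
  · filter_upwards [hlim.eventually_lt_const hε] with n hn x hx
    exact (hUg n x hx).2.trans_lt hn

theorem integrable_mul_of_continuous {G : ℝ → ℝ} (hG : Continuous G) (hintg : Integrable h)
    (hsupp : ∀ x ∉ Icc a b, h x = 0) : Integrable fun x => G x * h x := by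
  refine (integrableOn_iff_integrable_of_support_subset fun x hx => ?_).1
    (hintg.integrableOn.continuousOn_mul hG.continuousOn (isCompact_Icc (a := a) (b := b)))
  by_contra hx'
  exact hx (by simp [hsupp x hx'])

theorem tendsto_integral_comp_mul {U : ℕ → ℝ → ℝ} {Φ : ℝ → ℝ} (hΦ : Continuous Φ)
    (hg : Continuous g) (hU : ∀ n, Continuous (U n))
    (hlim : TendstoUniformlyOn U g atTop (Icc a b)) (hintg : Integrable h)
    (hsupp : ∀ x ∉ Icc a b, h x = 0) :
    Tendsto (fun n => ∫ x, Φ (U n x) * h x) atTop (nhds (∫ x, Φ (g x) * h x)) := by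
  obtain ⟨C, hC⟩ := (isCompact_Icc (a := a) (b := b)).exists_bound_of_continuousOn hg.continuousOn
  obtain ⟨B, hB⟩ := (isCompact_closedBall (0 : ℝ) (C + 1)).exists_bound_of_continuousOn
    hΦ.continuousOn
  refine tendsto_integral_filter_of_dominated_convergence (fun x => B * ‖h x‖)
    (.of_forall fun n =>
      (integrable_mul_of_continuous (by fun_prop) hintg hsupp).aestronglyMeasurable)
    ?_ (hintg.norm.const_mul B) (ae_of_all _ fun x => ?_)
  · filter_upwards [Metric.tendstoUniformlyOn_iff.1 hlim 1 one_pos] with n hn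
    refine ae_of_all _ fun x => ?_
    by_cases hx : x ∈ Icc a b
    · rw [norm_mul]
      refine mul_le_mul_of_nonneg_right (hB _ (mem_closedBall_zero_iff.2 ?_)) (norm_nonneg _)
      have hclose := hn x hx
      rw [dist_eq_norm] at hclose
      linarith [norm_sub_norm_le (U n x) (g x), norm_sub_rev (U n x) (g x), hC x hx]
    · simp [hsupp x hx]
  · by_cases hx : x ∈ Icc a b
    · exact ((hΦ.tendsto _).comp (hlim.tendsto_at hx)).mul_const _
    · simp [hsupp x hx]

theorem exists_contDiff_integral_deriv_sq_mul_lt_of_hasDerivAt {κ : ℝ}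
    (hg : ∀ x, HasDerivAt g (g' x) x) (hg' : Continuous g') (hintg : Integrable h)
    (hsupp : ∀ x ∉ Icc a b, h x = 0) (hh : ∫ x, h x ≠ 0) (hmean : ∫ x, g x * h x = 0)
    (hlt : ∫ x, g' x ^ 2 * h x < κ * ∫ x, g x ^ 2 * h x) :
    ∃ U : ℝ → ℝ, ContDiff ℝ (⊤ : ℕ∞) U ∧ ∫ x, U x * h x = 0 ∧
      ∫ x, deriv U x ^ 2 * h x < κ * ∫ x, U x ^ 2 * h x := by
  have hgc : Continuous g := continuous_iff_continuousAt.2 fun x => (hg x).continuousAt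
  obtain ⟨U, hU, hUg, hUg'⟩ := exists_contDiff_tendstoUniformlyOn_deriv hg hg' a b
  have hUc (n : ℕ) : Continuous (U n) := (hU n).continuous
  set c : ℕ → ℝ := fun n => (∫ x, U n x * h x) / ∫ x, h x with hc
  set V : ℕ → ℝ → ℝ := fun n x => U n x - c n with hV
  have hVsmooth (n : ℕ) : ContDiff ℝ (⊤ : ℕ∞) (V n) := (hU n).sub contDiff_const
  have hclim : Tendsto c atTop (nhds 0) := by
    have hlim := tendsto_integral_comp_mul continuous_id hgc hUc hUg hintg hsupp
    simpa [hmean] using hlim.div_const (∫ x, h x)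
  have hVg : TendstoUniformlyOn V g atTop (Icc a b) :=
    (hUg.sub (hclim.tendstoUniformlyOn_const _)).congr_right fun x _ => sub_zero (g x)
  have hVderiv (n : ℕ) : deriv (V n) = deriv (U n) := funext fun x => deriv_sub_const _
  have hVlim := tendsto_integral_comp_mul (continuous_pow 2) hgc
    (fun n => (hVsmooth n).continuous) hVg hintg hsupp
  have hV'lim := tendsto_integral_comp_mul (continuous_pow 2) hg'
    (fun n => (hU n).continuous_deriv (by simp)) hUg' hintg hsupp
  obtain ⟨n, hn⟩ := (hV'lim.eventually_lt (hVlim.const_mul κ) hlt).exists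
  refine ⟨V n, hVsmooth n, ?_, by rwa [hVderiv]⟩
  simp only [hV, sub_mul]
  rw [integral_sub (integrable_mul_of_continuous (hUc n) hintg hsupp) (hintg.const_mul _),
    integral_const_mul, hc, div_mul_cancel₀ _ hh, sub_self]

theorem exists_contDiff_integral_deriv_sq_mul_lt (hintg : Integrable h)
    (hsupp : ∀ x ∉ Ioo a b, h x = 0) (hpos : 0 < ∫ x, h x) (hM0 : 0 < M)
    (hM : ∀ᵐ x, h x < M) :
    ∃ U : ℝ → ℝ, ContDiff ℝ (⊤ : ℕ∞) U ∧ ∫ x, U x * h x = 0 ∧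
      ∫ x, deriv U x ^ 2 * h x < (π * M / ∫ x, h x) ^ 2 * ∫ x, U x ^ 2 * h x := by
  set k := π * M / ∫ x, h x with hkdef
  have hk : 0 < k := by positivity
  have hsupp' : ∀ x ∉ Icc a b, h x = 0 := fun x hx => hsupp x fun hx' =>
    hx (Ioo_subset_Icc_self hx')
  obtain ⟨m, hm⟩ := exists_integral_clippedSin_mul_eq_zero hintg hsupp hpos.le hk
  refine exists_contDiff_integral_deriv_sq_mul_lt_of_hasDerivAt
    (g' := fun x => k * clippedCos (k * (x - m))) (fun x => ?_) (by fun_prop) hintg hsupp' hpos.ne'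
    hm ?_
  · have hinner : HasDerivAt (fun x => k * (x - m)) k x := by
      simpa using ((hasDerivAt_id x).sub_const m).const_mul k
    simpa [mul_comm, Function.comp_def] using (hasDerivAt_clippedSin _).comp x hinner
  have hcos : 2 * ∫ x, clippedCos (k * (x - m)) ^ 2 * h x < ∫ x, h x := by
    have hMk : 2 * (M * (π / (2 * k))) = ∫ x, h x := by
      rw [hkdef]
      field_simp
    linarith [integral_clippedCos_sq_mul_lt hintg hM hk m]
  have hsum : (∫ x, clippedSin (k * (x - m)) ^ 2 * h x) +
      ∫ x, clippedCos (k * (x - m)) ^ 2 * h x = ∫ x, h x := by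
    rw [← integral_add (integrable_mul_of_continuous (by fun_prop) hintg hsupp')
      (integrable_mul_of_continuous (by fun_prop) hintg hsupp')]
    simp only [← add_mul, clippedSin_sq_add_clippedCos_sq, one_mul]
  simp only [mul_pow, mul_assoc]
  rw [integral_const_mul]
  exact mul_lt_mul_of_pos_left (by linarith) (by positivity)

end OneDimensionalTestFunction

section ShortSlices

variable {Ω : Set E2} {p : E2} {r : ℝ} {w : Fin 3 → ℝ} {n : Fin 3 → E2}
  {b : OrthonormalBasis (Fin 2) ℝ E2}

theorem sliceLength_lt_of_one_third_lt_weight (hr : 0 < r) (hbal : IsBalanced w n)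
    (hΩ : ∀ i, ∀ x ∈ Ω, ⟪x - p, n i⟫ < r) {i : Fin 3} (hi : 1 / 3 < w i) (hb : b 1 = n i)
    (s : ℝ) : sliceLength Ω p b s < 3 * r := by
  have hwi : 0 < w i := by linarith
  have hsub : frameSlice Ω p b s ⊆ Icc (r - r / w i) r := by
    intro y hy
    have hle := hbal.weight_mul_sub_inner_le (fun j => (hΩ j _ hy).le) i
    have hlt := hΩ i _ hy
    rw [← hb, inner_framePoint_sub_one] at hle hlt
    refine ⟨?_, hlt.le⟩
    rw [sub_le_comm, le_div_iff₀' hwi]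
    exact hle
  calc sliceLength Ω p b s ≤ r - (r - r / w i) :=
        sliceLength_le_sub (sub_le_self _ (by positivity)) hsub
    _ = r / w i := by ring
    _ < 3 * r := by
        rw [div_lt_iff₀ hwi]
        nlinarith

theorem inner_eq_neg_half_of_add_add_eq_zero {E : Type*} [NormedAddCommGroup E]
    [InnerProductSpace ℝ E] {x y z : E} (hx : ‖x‖ = 1) (hy : ‖y‖ = 1) (hz : ‖z‖ = 1)
    (hsum : x + y + z = 0) : ⟪x, y⟫ = -(1 / 2) := by
  have hsq := norm_add_sq_real x y
  rw [eq_neg_of_add_eq_zero_left hsum, norm_neg, hx, hy, hz] at hsq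
  linarith

-- The three tangent lines form an equilateral triangle, of height `3 * r` and with one side
-- orthogonal to `b 1`.
theorem sliceLength_lt_of_add_add_eq_zero (hr : 0 < r) (hn : ∀ i, ‖n i‖ = 1)
    (hsum : n 0 + n 1 + n 2 = 0) (hΩ : ∀ i, ∀ x ∈ Ω, ⟪x - p, n i⟫ < r) (hb : b 1 = n 0)
    {s : ℝ} (hs : s ≠ 0) : sliceLength Ω p b s < 3 * r := by
  rcases (frameSlice Ω p b s).eq_empty_or_nonempty with hempty | ⟨y₀, hy₀⟩
  · rw [sliceLength, hempty, measureReal_empty]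
    positivity
  have hn01 := inner_eq_neg_half_of_add_add_eq_zero (hn 0) (hn 1) (hn 2) hsum
  set κ := ⟪b 0, n 1⟫ with hκ
  have hκ0 : κ ≠ 0 := by
    intro hzero
    have hcoord := norm_sq_eq_inner_sq_add_inner_sq (b := b) (n 1)
    rw [real_inner_comm (b 0), real_inner_comm (b 1), ← hκ, hb, hn01, hn, hzero] at hcoord
    norm_num at hcoord
  have hsub : frameSlice Ω p b s ⊆ Icc (-2 * r + 2 * |s * κ|) r := by
    intro y hy
    have hlt0 := hΩ 0 _ hy
    have hlt1 := hΩ 1 _ hy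
    have hlt2 := hΩ 2 _ hy
    have hin1 : ⟪framePoint p b (s, y) - p, n 1⟫ = s * κ - y / 2 := by
      simp only [framePoint, add_sub_cancel_left, inner_add_left, inner_smul_left,
        conj_trivial, hb, hn01, ← hκ]
      ring
    rw [← hb, inner_framePoint_sub_one] at hlt0
    rw [hin1] at hlt1
    rw [eq_neg_of_add_eq_zero_right hsum, inner_neg_right, inner_add_right, hin1, ← hb,
      inner_framePoint_sub_one] at hlt2
    have habs : |s * κ| ≤ r + y / 2 := abs_le.2 ⟨by linarith, by linarith⟩
    exact ⟨by linarith, hlt0.le⟩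
  have hlen := sliceLength_le_sub ((hsub hy₀).1.trans (hsub hy₀).2) hsub
  linarith [abs_pos.2 (mul_ne_zero hs hκ0)]

theorem exists_orthonormalBasis_ae_sliceLength_lt (hr : 0 < r) (hbal : IsBalanced w n)
    (hΩ : ∀ i, ∀ x ∈ Ω, ⟪x - p, n i⟫ < r) :
    ∃ b : OrthonormalBasis (Fin 2) ℝ E2, ∀ᵐ s, sliceLength Ω p b s < 3 * r := by
  by_cases hbig : ∃ i, 1 / 3 < w i
  · obtain ⟨i, hi⟩ := hbig
    obtain ⟨b, hb⟩ := exists_orthonormalBasis_one_eq (hbal.norm_eq_one i)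
    exact ⟨b, ae_of_all _ (sliceLength_lt_of_one_third_lt_weight hr hbal hΩ hi hb)⟩
  · push Not at hbig
    have hweight : ∀ i, w i = 1 / 3 := by
      have hsum := hbal.sum_weight
      rw [Fin.sum_univ_three] at hsum
      intro i
      fin_cases i <;> simp only [Fin.zero_eta, Fin.mk_one, Fin.reduceFinMk] <;>
        linarith [hbig 0, hbig 1, hbig 2]
    have hsum : n 0 + n 1 + n 2 = 0 := by
      have hzero := hbal.sum_weight_smul
      rwa [Fin.sum_univ_three, hweight, hweight, hweight, ← smul_add, ← smul_add,
        smul_eq_zero_iff_right (by norm_num)] at hzero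
    obtain ⟨b, hb⟩ := exists_orthonormalBasis_one_eq (hbal.norm_eq_one 0)
    refine ⟨b, ?_⟩
    filter_upwards [Measure.ae_ne volume (0 : ℝ)] with s hs
    exact sliceLength_lt_of_add_add_eq_zero hr hbal.norm_eq_one hsum hΩ hb hs

end ShortSlices

section NeumannEigenvalue

variable {Ω : Set E2} {M : ℝ}

theorem nEig1_le_div {u : E2 → ℝ} (hu : ContDiff ℝ (⊤ : ℕ∞) u) (hmean : ∫ x in Ω, u x = 0)
    (hu0 : ∫ x in Ω, u x ^ 2 ≠ 0) :
    nEig1 Ω ≤ (∫ x in Ω, ‖fderiv ℝ u x‖ ^ 2) / ∫ x in Ω, u x ^ 2 := by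
  refine csInf_le ⟨0, ?_⟩ ⟨u, hu, hmean, hu0, rfl⟩
  rintro R ⟨v, -, -, -, rfl⟩
  positivity

theorem norm_fderiv_comp_inner_sub {E : Type*} [NormedAddCommGroup E] [InnerProductSpace ℝ E]
    {U : ℝ → ℝ} (hU : Differentiable ℝ U) {e : E} (he : ‖e‖ = 1) (p x : E) :
    ‖fderiv ℝ (fun x => U ⟪x - p, e⟫) x‖ = |deriv U ⟪x - p, e⟫| := by
  have hinner : HasFDerivAt (fun x => ⟪x - p, e⟫) (innerSL ℝ e) x := by
    simp only [real_inner_comm e]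
    exact (innerSL ℝ e).hasFDerivAt.comp x ((hasFDerivAt_id x).sub_const p)
  have hcomp := (hU ⟪x - p, e⟫).hasDerivAt.comp_hasFDerivAt x hinner
  rw [Function.comp_def] at hcomp
  rw [hcomp.fderiv, norm_smul, innerSL_apply_norm, he, mul_one, Real.norm_eq_abs]

theorem exists_contDiff_integral_norm_fderiv_sq_lt (p : E2) (b : OrthonormalBasis (Fin 2) ℝ E2)
    (hne : Ω.Nonempty) (hopen : IsOpen Ω) (hbd : Bornology.IsBounded Ω) (hM0 : 0 < M)
    (hM : ∀ᵐ s, sliceLength Ω p b s < M) :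
    ∃ u : E2 → ℝ, ContDiff ℝ (⊤ : ℕ∞) u ∧ ∫ x in Ω, u x = 0 ∧
      ∫ x in Ω, ‖fderiv ℝ u x‖ ^ 2 < (π * M / volume.real Ω) ^ 2 * ∫ x in Ω, u x ^ 2 := by
  obtain ⟨R, hR⟩ := hbd.subset_closedBall p
  have hsupp : ∀ s ∉ Ioo (-(R + 1)) (R + 1), sliceLength Ω p b s = 0 := fun s hs =>
    sliceLength_eq_zero p b fun hs' => hs
      (Icc_subset_Ioo (by linarith) (by linarith) (frameShadow_subset_Icc p b hR hs'))
  have hvol := volume_real_eq_integral_sliceLength p b hopen hbd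
  obtain ⟨U, hU, hmean, hlt⟩ := exists_contDiff_integral_deriv_sq_mul_lt
    (integrable_sliceLength p b hopen hbd) hsupp
    (hvol ▸ volume_real_pos_of_isOpen hne hopen hbd) hM0 hM
  have hUc : Continuous U := hU.continuous
  have hU'c : Continuous (deriv U) := hU.continuous_deriv (by simp)
  refine ⟨fun x => U ⟪x - p, b 0⟫,
    hU.comp ((contDiff_id.sub contDiff_const).inner ℝ contDiff_const), ?_, ?_⟩
  · rw [setIntegral_comp_inner_eq_integral_mul_sliceLength p b hopen hbd hUc, hmean]
  · simp only [norm_fderiv_comp_inner_sub (hU.differentiable (by simp)) (b.norm_eq_one 0), sq_abs]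
    rwa [setIntegral_comp_inner_eq_integral_mul_sliceLength (G := fun s => deriv U s ^ 2) p b
        hopen hbd (by fun_prop),
      setIntegral_comp_inner_eq_integral_mul_sliceLength (G := fun s => U s ^ 2) p b
        hopen hbd (by fun_prop), hvol]

theorem setIntegral_sq_pos_of_lt {u : E2 → ℝ} {κ : ℝ} (hκ : 0 ≤ κ)
    (hlt : ∫ x in Ω, ‖fderiv ℝ u x‖ ^ 2 < κ * ∫ x in Ω, u x ^ 2) : 0 < ∫ x in Ω, u x ^ 2 :=
  pos_of_mul_pos_right ((integral_nonneg fun _ => sq_nonneg _).trans_lt hlt) hκ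

theorem nEig1_lt_of_ae_sliceLength_lt (p : E2) (b : OrthonormalBasis (Fin 2) ℝ E2)
    (hne : Ω.Nonempty) (hopen : IsOpen Ω) (hbd : Bornology.IsBounded Ω) (hM0 : 0 < M)
    (hM : ∀ᵐ s, sliceLength Ω p b s < M) : nEig1 Ω < (π * M / volume.real Ω) ^ 2 := by
  obtain ⟨u, hu, hmean, hlt⟩ :=
    exists_contDiff_integral_norm_fderiv_sq_lt p b hne hopen hbd hM0 hM
  have hpos := setIntegral_sq_pos_of_lt (sq_nonneg _) hlt
  exact (nEig1_le_div hu hmean hpos.ne').trans_lt ((div_lt_iff₀ hpos).2 hlt)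

theorem exists_contDiff_setIntegral_sq_ne_zero (hne : Ω.Nonempty) (hopen : IsOpen Ω)
    (hbd : Bornology.IsBounded Ω) :
    ∃ u : E2 → ℝ, ContDiff ℝ (⊤ : ℕ∞) u ∧ ∫ x in Ω, u x = 0 ∧ ∫ x in Ω, u x ^ 2 ≠ 0 := by
  let b := EuclideanSpace.basisFun (Fin 2) ℝ
  obtain ⟨R, hR0, hR⟩ := hbd.subset_closedBall_lt 0 0
  have hM : ∀ s, sliceLength Ω 0 b s < 3 * R := fun s => by
    linarith [sliceLength_le_sub (by linarith) (frameSlice_subset_Icc 0 b hR s)]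
  obtain ⟨u, hu, hmean, hlt⟩ := exists_contDiff_integral_norm_fderiv_sq_lt 0 b hne hopen hbd
    (by positivity) (ae_of_all _ hM)
  exact ⟨u, hu, hmean, (setIntegral_sq_pos_of_lt (sq_nonneg _) hlt).ne'⟩

theorem pi_div_diam_sq_le_nEig1 (hne : Ω.Nonempty) (hopen : IsOpen Ω)
    (hbd : Bornology.IsBounded Ω) (hconv : Convex ℝ Ω) :
    (π / Metric.diam Ω) ^ 2 ≤ nEig1 Ω := by
  obtain ⟨u, hu, hmean, hu0⟩ := exists_contDiff_setIntegral_sq_ne_zero hne hopen hbd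
  refine le_csInf ⟨_, u, hu, hmean, hu0, rfl⟩ ?_
  rintro R ⟨v, hv, hvmean, hv0, rfl⟩
  rw [le_div_iff₀ ((integral_nonneg fun _ => sq_nonneg _).lt_of_ne' hv0)]
  exact sq_mul_setIntegral_sq_le_setIntegral_norm_fderiv_sq hne hopen hbd hconv
    (fun x hx y hy => Metric.dist_le_diam_of_mem hbd hx hy) (hv.of_le (by exact_mod_cast le_top))
    hvmean

end NeumannEigenvalue

/-- The sharp two-sided bound `π⁴/4 < |Ω|² λ₁(Ω) μ₁(Ω) < 9 π² λ₁(𝔻)` for every nonempty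
bounded open convex plane set `Ω` (note `λ₁(𝔻) = j₀₁²`). -/
theorem F_two_sided_bound (Ω : Set E2) (hne : Ω.Nonempty) (hopen : IsOpen Ω)
    (hbd : Bornology.IsBounded Ω) (hconv : Convex ℝ Ω) :
    π^4 / 4 < (volume Ω).toReal^2 * dEig1 Ω * nEig1 Ω ∧
      (volume Ω).toReal^2 * dEig1 Ω * nEig1 Ω < 9 * π^2 * dEig1 unitDisc := by
  obtain ⟨p, r, w, n, hr, hball, hbal, hΩ⟩ :=
    exists_inscribed_ball_balanced (N := 3) hne hopen hbd hconv (by simp)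
  obtain ⟨b, hb⟩ := exists_orthonormalBasis_ae_sliceLength_lt hr hbal hΩ
  have hdirichlet := pi_sq_div_le_dEig1 hne hopen hbal hr hΩ
  have hdisc := sq_mul_dEig1_le_dEig1_unitDisc hr hball
  have hneumann := pi_div_diam_sq_le_nEig1 hne hopen hbd hconv
  have hslices := nEig1_lt_of_ae_sliceLength_lt p b hne hopen hbd (by positivity) hb
  have harea := mul_diam_lt_volume_real hopen hbd hconv hr hball
  have hdiam := diam_pos_of_isOpen hne hopen hbd
  have hvol := volume_real_pos_of_isOpen hne hopen hbd
  have hdirichlet_pos : 0 < dEig1 Ω := lt_of_lt_of_le (by positivity) hdirichlet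
  rw [← measureReal_def]
  constructor
  · calc π ^ 4 / 4
        = (r * Metric.diam Ω) ^ 2 * (π / (2 * r)) ^ 2 * (π / Metric.diam Ω) ^ 2 := by
          field_simp; norm_num
      _ < volume.real Ω ^ 2 * (π / (2 * r)) ^ 2 * (π / Metric.diam Ω) ^ 2 := by gcongr
      _ ≤ volume.real Ω ^ 2 * dEig1 Ω * nEig1 Ω := by gcongr
  · calc volume.real Ω ^ 2 * dEig1 Ω * nEig1 Ω
        < volume.real Ω ^ 2 * dEig1 Ω * (π * (3 * r) / volume.real Ω) ^ 2 := by gcongr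
      _ = 9 * π ^ 2 * (r ^ 2 * dEig1 Ω) := by field_simp; norm_num
      _ ≤ 9 * π ^ 2 * dEig1 unitDisc := by gcongr
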